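/- Let Ω ⊂ ℂ be a bounded domain containing 0 whose boundary is an analytic Jordan curve, and let u be a negative continuous subharmonic exhaustion of Ω with finite Monge–Ampère mass. Then the algebra A(Ω) of functions holomorphic on Ω and continuous on the closure of Ω is dense in the Poletsky–Stessin Hardy space H^p_u(Ω) for every 1 ≤ p < ∞. -/

import Mathlib

open MeasureTheory Filter Metric Complex Set
open scoped Real ENNReal Topology

noncomputable section

/-- The Laplacian of a real-valued function on `ℂ ≅ ℝ²`. -/
def lap (φ : ℂ → ℝ) (z : ℂ) : ℝ :=
  fderiv ℝ (fun w => fderiv ℝ φ w 1) z 1 +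
    fderiv ℝ (fun w => fderiv ℝ φ w Complex.I) z Complex.I

/-- `h` is harmonic on `s`. -/
def HarmonicOn (h : ℂ → ℝ) (s : Set ℂ) : Prop :=
  ContDiffOn ℝ 2 h s ∧ ∀ z ∈ s, lap h z = 0

/-- `u` is subharmonic on `s` (continuous with the sub-mean-value property). -/
def SubharmonicOn (u : ℂ → ℝ) (s : Set ℂ) : Prop :=
  ContinuousOn u s ∧ ∀ z ∈ s, ∀ r : ℝ, 0 < r → closedBall z r ⊆ s →
    u z ≤ (2 * Real.pi)⁻¹ *
      ∫ t in (0:ℝ)..(2 * Real.pi), u (z + (r : ℂ) * Complex.exp ((t : ℂ) * Complex.I))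

/-- `u` is a negative continuous subharmonic exhaustion function for `Ω`:
sublevel sets `{u < c}`, `c < 0`, are relatively compact in `Ω`. -/
structure IsExhaustion (u : ℂ → ℝ) (Ω : Set ℂ) : Prop where
  neg : ∀ z ∈ Ω, u z < 0
  subh : SubharmonicOn u Ω
  exh : ∀ c : ℝ, c < 0 → IsCompact (closure {z | z ∈ Ω ∧ u z < c}) ∧
    closure {z | z ∈ Ω ∧ u z < c} ⊆ Ω

/-- `ν` is the Riesz measure `dd^c u = (1/4) Δu dA` of `u` on `Ω`, characterized
distributionally: `∫ φ dν = (1/4) ∫_Ω u Δφ dA` for test functions `φ`. -/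
def IsRieszMeasure (u : ℂ → ℝ) (Ω : Set ℂ) (ν : Measure ℂ) : Prop :=
  ν Ωᶜ = 0 ∧
  ∀ φ : ℂ → ℝ, ContDiff ℝ 2 φ → HasCompactSupport φ → tsupport φ ⊆ Ω →
    ∫ z, φ z ∂ν = (4 : ℝ)⁻¹ * ∫ z in Ω, u z * lap φ z

/-- `μ` is the Monge–Ampère measure `μ_{u,r} = dd^c max(u,r) - χ_{Ω∖{u<r}} dd^c u`,
where `ν = dd^c u`. -/
def IsMAMeasure (u : ℂ → ℝ) (Ω : Set ℂ) (ν : Measure ℂ) (r : ℝ) (μ : Measure ℂ) : Prop :=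
  ∃ νr : Measure ℂ, IsRieszMeasure (fun z => max (u z) r) Ω νr ∧
    μ = νr - ν.restrict {z | z ∈ Ω ∧ r ≤ u z}

/-- The `p`-th power of the Poletsky–Stessin Hardy "norm",
`limsup_{r→0⁻} ∫ |f|^p dμ_{u,r}`. -/
def psNormPow (p : ℝ) (μfam : ℝ → Measure ℂ) (f : ℂ → ℂ) : ℝ≥0∞ :=
  Filter.limsup (fun r => ∫⁻ z, ENNReal.ofReal (‖f z‖ ^ p) ∂(μfam r))
    (nhdsWithin 0 (Set.Iio 0))

/-- The Poletsky–Stessin Hardy norm. -/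
def psNorm (p : ℝ) (μfam : ℝ → Measure ℂ) (f : ℂ → ℂ) : ℝ≥0∞ :=
  psNormPow p μfam f ^ (1 / p)

/-- Membership in the Poletsky–Stessin Hardy space `H^p_u(Ω)`, where `μfam r = μ_{u,r}`. -/
def MemPS (p : ℝ) (Ω : Set ℂ) (μfam : ℝ → Measure ℂ) (f : ℂ → ℂ) : Prop :=
  DifferentiableOn ℂ f Ω ∧ psNormPow p μfam f < ⊤

/-- Membership in the classical Hardy space `H^p(Ω)`: `|f|^p` has a harmonic majorant. -/
def MemHClassical (p : ℝ) (Ω : Set ℂ) (f : ℂ → ℂ) : Prop :=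
  DifferentiableOn ℂ f Ω ∧
    ∃ h : ℂ → ℝ, HarmonicOn h Ω ∧ ∀ z ∈ Ω, ‖f z‖ ^ p ≤ h z

/-- A bounded domain in `ℂ` containing `0` whose boundary is an analytic Jordan curve:
there is a conformal map of the unit disc onto `Ω` extending analytically and injectively
across the closed disc, carrying the unit circle onto the boundary of `Ω`. -/
structure AnalyticJordanDomain (Ω : Set ℂ) : Prop where
  isOpen : IsOpen Ω
  isConnected : IsConnected Ω
  isBounded : Bornology.IsBounded Ω
  zero_mem : (0:ℂ) ∈ Ω
  analyticBoundary : ∃ (U : Set ℂ) (ψ : ℂ → ℂ), IsOpen U ∧ closedBall (0:ℂ) 1 ⊆ U ∧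
    DifferentiableOn ℂ ψ U ∧ Set.InjOn ψ U ∧ ψ '' ball (0:ℂ) 1 = Ω ∧
    ψ '' sphere (0:ℂ) 1 = frontier Ω

/-- `μ` is the boundary Monge–Ampère measure: the weak* limit of the measures
`μfam r = μ_{u,r}` as `r → 0⁻`. -/
def IsBoundaryMA (μfam : ℝ → Measure ℂ) (μ : Measure ℂ) : Prop :=
  ∀ φ : ℂ → ℝ, Continuous φ →
    Filter.Tendsto (fun r => ∫ z, φ z ∂(μfam r)) (nhdsWithin 0 (Set.Iio 0))
      (nhds (∫ z, φ z ∂μ))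

/-- `f` has nontangential limit `L` at the boundary point `ξ` of `Ω`. -/
def NTLim (Ω : Set ℂ) (f : ℂ → ℂ) (ξ : ℂ) (L : ℂ) : Prop :=
  ∀ C : ℝ, 1 < C →
    Filter.Tendsto f
      (nhdsWithin ξ {z | z ∈ Ω ∧ dist z ξ ≤ C * infDist z (frontier Ω)}) (nhds L)

/-- Arc length measure on the boundary of `Ω` (1-dimensional Hausdorff measure). -/
def arcLen (Ω : Set ℂ) : Measure ℂ := (μH[1] : Measure ℂ).restrict (frontier Ω)

/-!
Let `μ_r` be the Monge–Ampère measure on `{u = r}`. By the Lelong–Jensen formula `∫ v dμ_r`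
increases with `r` for every subharmonic `v ≥ 0`, in particular for `v = |f|^p`.

Transport `Ω` to the unit disc by a Riemann map `φ` with inverse `ψ`. Hopf's lemma gives
`u ≤ -c (1 - |φ|²)` near the boundary, so testing against potentials of thin rings shows that, as
soon as `∫ |f|^p dμ_r` stays bounded, so do the averages of `(|f ∘ ψ|² + 1)^(1/2)` over some circles
tending to the unit circle; a Herglotz integral then produces a holomorphic `H` with `|f| ≤ re H`.
The function `f w`, `w = s / (s + H)`, is bounded by `s`, and it tends to `f` in `H^p_u(Ω)` as
`s → ∞`: its norm tends to that of `f`, and `|1 - w|² + |w|² ≤ 1` controls the error by the loss of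
norm.

A bounded `g` is a locally uniform limit of its dilates `g ∘ ψ ∘ (t φ)`, which lie in `A(Ω)` but
need not converge to `g` in norm. Among the elements of `A(Ω)` close to `g` on `{u ≤ -δ}`, however,
near-minimizers of the `H²_u` norm are Cauchy as `δ → 0`, by the parallelogram law, and on bounded
functions small `H²_u` norm forces small `H^p_u` norm.
-/

/-! ### The Laplacian and test functions -/

section Laplacian

variable {f g φ v : ℂ → ℝ} {z : ℂ}

lemma lap_congr_of_eventuallyEq (h : f =ᶠ[𝓝 z] g) : lap f z = lap g z := by
  have hfderiv (c : ℂ) : (fun w => fderiv ℝ f w c) =ᶠ[𝓝 z] fun w => fderiv ℝ g w c := by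
    filter_upwards [h.eventuallyEq_nhds] with w hw
    rw [hw.fderiv_eq]
  simp only [lap, (hfderiv _).fderiv_eq]

lemma tsupport_lap_subset (φ : ℂ → ℝ) : tsupport (lap φ) ⊆ tsupport φ := by
  refine closure_minimal (fun z hz => ?_) (isClosed_tsupport φ)
  by_contra hzφ
  refine hz ?_
  rw [lap_congr_of_eventuallyEq (notMem_tsupport_iff_eventuallyEq.1 hzφ)]
  simp [lap]

lemma hasCompactSupport_lap (h : HasCompactSupport φ) : HasCompactSupport (lap φ) :=
  h.mono' (subset_closure.trans (tsupport_lap_subset φ))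

lemma contDiff_fderiv_apply_const (h : ContDiff ℝ 2 φ) (c : ℂ) :
    ContDiff ℝ 1 fun w => fderiv ℝ φ w c :=
  (h.fderiv_right (by norm_num)).clm_apply contDiff_const

lemma continuous_fderiv_fderiv_apply_const (h : ContDiff ℝ 2 φ) (c d : ℂ) :
    Continuous fun z => fderiv ℝ (fun w => fderiv ℝ φ w c) z d :=
  ((contDiff_fderiv_apply_const h c).continuous_fderiv one_ne_zero).clm_apply continuous_const

lemma continuous_lap (h : ContDiff ℝ 2 φ) : Continuous (lap φ) :=
  (continuous_fderiv_fderiv_apply_const h 1 1).add (continuous_fderiv_fderiv_apply_const h I I)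

lemma lap_comp {N : ℂ → ℝ} {e e₁ : ℝ → ℝ} {e₂ : ℝ} (hN : ContDiffAt ℝ 2 N z)
    (he : ∀ᶠ x in 𝓝 (N z), HasDerivAt e (e₁ x) x) (he₁ : HasDerivAt e₁ e₂ (N z)) :
    lap (fun w => e (N w)) z =
      e₁ (N z) * lap N z + e₂ * (fderiv ℝ N z 1 ^ 2 + fderiv ℝ N z I ^ 2) := by
  have hNd : ∀ᶠ w in 𝓝 z, DifferentiableAt ℝ N w :=
    (hN.eventually (by norm_num)).mono fun w hw => hw.differentiableAt two_ne_zero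
  have hfirst (c : ℂ) : (fun w => fderiv ℝ (fun w => e (N w)) w c) =ᶠ[𝓝 z]
      fun w => e₁ (N w) * fderiv ℝ N w c := by
    filter_upwards [hNd, hN.continuousAt.eventually he] with w hw hew
    have : HasFDerivAt (fun w => e (N w)) (e₁ (N w) • fderiv ℝ N w) w :=
      hew.comp_hasFDerivAt w hw.hasFDerivAt
    simp [this.fderiv]
  have hsecond (c : ℂ) : fderiv ℝ (fun w => fderiv ℝ (fun w => e (N w)) w c) z c =
      e₁ (N z) * fderiv ℝ (fun w => fderiv ℝ N w c) z c + e₂ * fderiv ℝ N z c ^ 2 := by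
    have hNc : DifferentiableAt ℝ (fun w => fderiv ℝ N w c) z :=
      ((hN.fderiv_right (m := 1) (by norm_num)).clm_apply contDiffAt_const).differentiableAt
        one_ne_zero
    have he₁N : HasFDerivAt (fun w => e₁ (N w)) (e₂ • fderiv ℝ N z) z :=
      he₁.comp_hasFDerivAt z hNd.self_of_nhds.hasFDerivAt
    rw [(hfirst c).fderiv_eq, (he₁N.fun_mul hNc.hasFDerivAt).fderiv]
    simp only [add_apply, smul_apply, smul_eq_mul]
    ring
  simp only [lap, hsecond]
  ring

lemma fderiv_norm_sq_of_analyticAt {g : ℂ → ℂ} (hg : AnalyticAt ℂ g z) (c : ℂ) :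
    fderiv ℝ (fun w => ‖g w‖ ^ 2) z c = 2 * inner ℝ (g z) (deriv g z * c) := by
  have := (hg.differentiableAt.hasDerivAt.hasFDerivAt.restrictScalars ℝ).norm_sq
  rw [this.fderiv]
  simp only [smul_apply, ContinuousLinearMap.comp_apply, ContinuousLinearMap.coe_restrictScalars',
    ContinuousLinearMap.toSpanSingleton_apply, smul_eq_mul, coe_innerSL_apply, nsmul_eq_mul,
    Nat.cast_ofNat, mul_comm]

lemma lap_norm_sq {g : ℂ → ℂ} (hg : AnalyticAt ℂ g z) :
    lap (fun w => ‖g w‖ ^ 2) z = 4 * ‖deriv g z‖ ^ 2 := by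
  have hsecond (c : ℂ) : fderiv ℝ (fun w => fderiv ℝ (fun w => ‖g w‖ ^ 2) w c) z c =
      2 * (‖deriv g z * c‖ ^ 2 + inner ℝ (g z) (deriv (deriv g) z * c * c)) := by
    have hev : (fun w => fderiv ℝ (fun w => ‖g w‖ ^ 2) w c) =ᶠ[𝓝 z]
        fun w => 2 * inner ℝ (g w) (deriv g w * c) := by
      filter_upwards [hg.eventually_analyticAt] with w hw
      exact fderiv_norm_sq_of_analyticAt hw c
    have hg₁ := hg.differentiableAt.hasDerivAt.hasFDerivAt.restrictScalars ℝ
    have hg₂ := (hg.deriv.differentiableAt.hasDerivAt.mul_const c).hasFDerivAt.restrictScalars ℝ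
    rw [hev.fderiv_eq, ((hg₁.inner ℝ hg₂).const_mul 2).fderiv]
    simp [fderivInnerCLM_apply, mul_comm, add_comm]
  simp only [lap, hsecond, norm_mul, Complex.norm_I, mul_assoc, I_mul_I, mul_one,
    mul_neg, inner_neg_right]
  ring

lemma lap_comp_norm_sq {g : ℂ → ℂ} {e e₁ : ℝ → ℝ} {e₂ : ℝ} (hg : AnalyticAt ℂ g z)
    (he : ∀ᶠ x in 𝓝 (‖g z‖ ^ 2), HasDerivAt e (e₁ x) x) (he₁ : HasDerivAt e₁ e₂ (‖g z‖ ^ 2)) :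
    lap (fun w => e (‖g w‖ ^ 2)) z =
      4 * ‖deriv g z‖ ^ 2 * (e₁ (‖g z‖ ^ 2) + ‖g z‖ ^ 2 * e₂) := by
  have hN : ContDiffAt ℝ 2 (fun w => ‖g w‖ ^ 2) z :=
    (hg.contDiffAt.restrict_scalars ℝ).norm_sq ℝ
  have hgrad : fderiv ℝ (fun w => ‖g w‖ ^ 2) z 1 ^ 2 + fderiv ℝ (fun w => ‖g w‖ ^ 2) z I ^ 2 =
      4 * (‖g z‖ ^ 2 * ‖deriv g z‖ ^ 2) := by
    rw [fderiv_norm_sq_of_analyticAt hg, fderiv_norm_sq_of_analyticAt hg]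
    simp only [Complex.inner, ← Complex.normSq_eq_norm_sq,
      Complex.normSq_apply, mul_re, mul_im, conj_re, conj_im, I_re, I_im, one_re, one_im]
    ring
  rw [lap_comp hN he he₁, lap_norm_sq hg, hgrad]
  ring

end Laplacian

/-- `η` is a `C²` test function on `Ω`: the class against which `IsRieszMeasure` tests. -/
structure IsTestFunction (η : ℂ → ℝ) (Ω : Set ℂ) : Prop where
  contDiff : ContDiff ℝ 2 η
  hasCompactSupport : HasCompactSupport η
  tsupport_subset : tsupport η ⊆ Ω

section TestFunction

variable {Ω K : Set ℂ} {w g η χ v : ℂ → ℝ}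

lemma continuous_mul_of_tsupport_subset (hΩ : IsOpen Ω) (hw : ContinuousOn w Ω)
    (hg : Continuous g) (hgΩ : tsupport g ⊆ Ω) : Continuous fun z => w z * g z :=
  continuous_of_tsupport fun _ hz =>
    (hw.continuousAt (hΩ.mem_nhds (hgΩ (tsupport_mul_subset_right hz)))).mul hg.continuousAt

lemma integrable_mul_of_tsupport_subset {μ : Measure ℂ} [IsFiniteMeasureOnCompacts μ]
    (hΩ : IsOpen Ω) (hw : ContinuousOn w Ω) (hg : Continuous g) (hgc : HasCompactSupport g)
    (hgΩ : tsupport g ⊆ Ω) : Integrable (fun z => w z * g z) μ :=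
  (continuous_mul_of_tsupport_subset hΩ hw hg hgΩ).integrable_of_hasCompactSupport hgc.mul_left

lemma setIntegral_mul_of_tsupport_subset {μ : Measure ℂ} (hgΩ : tsupport g ⊆ Ω) :
    ∫ z in Ω, w z * g z ∂μ = ∫ z, w z * g z ∂μ :=
  setIntegral_eq_integral_of_forall_compl_eq_zero fun _ hz => by
    rw [image_eq_zero_of_notMem_tsupport fun h => hz (hgΩ h), mul_zero]

lemma integral_mul_fderiv_apply_eq_neg (hΩ : IsOpen Ω) (hv : ContDiffOn ℝ 1 v Ω)
    (hg : ContDiff ℝ 1 g) (hgc : HasCompactSupport g) (hgΩ : tsupport g ⊆ Ω) (c : ℂ) :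
    ∫ z, v z * fderiv ℝ g z c = -∫ z, fderiv ℝ v z c * g z := by
  have hg' : Continuous fun z => fderiv ℝ g z c :=
    (hg.continuous_fderiv one_ne_zero).clm_apply continuous_const
  have hv' : ContinuousOn (fun z => fderiv ℝ v z c) Ω :=
    (hv.continuousOn_fderiv_of_isOpen hΩ le_rfl).clm_apply continuousOn_const
  exact integral_mul_fderiv_eq_neg_fderiv_mul_of_integrable
    (integrable_mul_of_tsupport_subset hΩ hv' hg.continuous hgc hgΩ)
    (integrable_mul_of_tsupport_subset hΩ hv.continuousOn hg' (hgc.fderiv_apply ℝ c)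
      ((tsupport_fderiv_apply_subset ℝ c).trans hgΩ))
    (integrable_mul_of_tsupport_subset hΩ hv.continuousOn hg.continuous hgc hgΩ)
    (fun z hz => (hv.differentiableOn one_ne_zero).differentiableAt (hΩ.mem_nhds (hgΩ hz)))
    fun z _ => hg.differentiable one_ne_zero z

namespace IsTestFunction

lemma mono {Ω' : Set ℂ} (hη : IsTestFunction η Ω) (h : Ω ⊆ Ω') : IsTestFunction η Ω' :=
  ⟨hη.contDiff, hη.hasCompactSupport, hη.tsupport_subset.trans h⟩

lemma add (hη : IsTestFunction η Ω) (hχ : IsTestFunction χ Ω) :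
    IsTestFunction (fun z => η z + χ z) Ω :=
  ⟨hη.contDiff.add hχ.contDiff, hη.hasCompactSupport.add hχ.hasCompactSupport,
    (tsupport_add η χ).trans (union_subset hη.tsupport_subset hχ.tsupport_subset)⟩

lemma mul_contDiffOn (hΩ : IsOpen Ω) (hη : IsTestFunction η Ω) (hv : ContDiffOn ℝ 2 v Ω) :
    IsTestFunction (fun z => η z * v z) Ω := by
  have hsub : tsupport (fun z => η z * v z) ⊆ tsupport η := tsupport_mul_subset_left
  refine ⟨contDiff_iff_contDiffAt.2 fun z => ?_, hη.hasCompactSupport.mul_right,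
    hsub.trans hη.tsupport_subset⟩
  by_cases hz : z ∈ tsupport η
  · exact hη.contDiff.contDiffAt.mul (hv.contDiffAt (hΩ.mem_nhds (hη.tsupport_subset hz)))
  · exact contDiffAt_const.congr_of_eventuallyEq
      (notMem_tsupport_iff_eventuallyEq.1 fun h => hz (hsub h))

lemma tsupport_lap_subset (hη : IsTestFunction η Ω) : tsupport (lap η) ⊆ Ω :=
  (_root_.tsupport_lap_subset η).trans hη.tsupport_subset

lemma integrable (hη : IsTestFunction η Ω) {μ : Measure ℂ}
    (hμ : ∀ K, IsCompact K → K ⊆ Ω → μ K < ⊤) : Integrable η μ := by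
  rw [← integrableOn_iff_integrable_of_support_subset (subset_tsupport η)]
  obtain ⟨M, hM⟩ := hη.contDiff.continuous.bounded_above_of_compact_support hη.hasCompactSupport
  exact Measure.integrableOn_of_bounded (hμ _ hη.hasCompactSupport hη.tsupport_subset).ne
    hη.contDiff.continuous.aestronglyMeasurable (ae_of_all _ hM)

lemma integrable_mul_lap (hΩ : IsOpen Ω) (hη : IsTestFunction η Ω) (hw : ContinuousOn w Ω) :
    Integrable fun z => w z * lap η z :=
  integrable_mul_of_tsupport_subset hΩ hw (continuous_lap hη.contDiff)
    (hasCompactSupport_lap hη.hasCompactSupport) hη.tsupport_lap_subset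

lemma integral_mul_lap_comm (hΩ : IsOpen Ω) (hη : IsTestFunction η Ω)
    (hv : ContDiffOn ℝ 2 v Ω) : ∫ z, v z * lap η z = ∫ z, lap v z * η z := by
  have hη' (c : ℂ) : tsupport (fun z => fderiv ℝ η z c) ⊆ Ω :=
    (tsupport_fderiv_apply_subset ℝ c).trans hη.tsupport_subset
  have hηc (c : ℂ) : HasCompactSupport fun z => fderiv ℝ η z c :=
    hη.hasCompactSupport.fderiv_apply ℝ c
  have hv' (c : ℂ) : ContDiffOn ℝ 1 (fun z => fderiv ℝ v z c) Ω :=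
    (hv.fderiv_of_isOpen hΩ (by norm_num)).clm_apply contDiffOn_const
  have hdir (c : ℂ) : ∫ z, v z * fderiv ℝ (fun w => fderiv ℝ η w c) z c =
      ∫ z, fderiv ℝ (fun w => fderiv ℝ v w c) z c * η z := by
    rw [integral_mul_fderiv_apply_eq_neg hΩ (hv.of_le one_le_two)
      (contDiff_fderiv_apply_const hη.contDiff c) (hηc c) (hη' c), neg_eq_iff_eq_neg]
    exact integral_mul_fderiv_apply_eq_neg hΩ (hv' c) (hη.contDiff.of_le one_le_two)
      hη.hasCompactSupport hη.tsupport_subset c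
  have hint (c : ℂ) : Integrable fun z => v z * fderiv ℝ (fun w => fderiv ℝ η w c) z c :=
    integrable_mul_of_tsupport_subset hΩ hv.continuousOn
      (continuous_fderiv_fderiv_apply_const hη.contDiff c c) ((hηc c).fderiv_apply ℝ c)
      ((tsupport_fderiv_apply_subset ℝ c).trans (hη' c))
  have hint' (c : ℂ) : Integrable fun z => fderiv ℝ (fun w => fderiv ℝ v w c) z c * η z :=
    integrable_mul_of_tsupport_subset hΩ
      (((hv' c).continuousOn_fderiv_of_isOpen hΩ le_rfl).clm_apply continuousOn_const)
      hη.contDiff.continuous hη.hasCompactSupport hη.tsupport_subset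
  simp only [lap, mul_add, add_mul]
  rw [integral_add (hint 1) (hint I), integral_add (hint' 1) (hint' I), hdir, hdir]

lemma integral_lap (hη : IsTestFunction η Ω) : ∫ z, lap η z = 0 := by
  simpa [lap] using
    (hη.mono (subset_univ Ω)).integral_mul_lap_comm isOpen_univ (v := fun _ => 1) contDiffOn_const

end IsTestFunction

lemma lap_add (hη : ContDiff ℝ 2 η) (hχ : ContDiff ℝ 2 χ) (z : ℂ) :
    lap (fun w => η w + χ w) z = lap η z + lap χ z := by
  have hfirst (c : ℂ) : (fun w => fderiv ℝ (fun w => η w + χ w) w c) =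
      fun w => fderiv ℝ η w c + fderiv ℝ χ w c := by
    ext w
    rw [fderiv_fun_add (hη.differentiable two_ne_zero w) (hχ.differentiable two_ne_zero w),
      add_apply]
  have hsecond (c : ℂ) : fderiv ℝ (fun w => fderiv ℝ (fun w => η w + χ w) w c) z c =
      fderiv ℝ (fun w => fderiv ℝ η w c) z c + fderiv ℝ (fun w => fderiv ℝ χ w c) z c := by
    rw [hfirst, fderiv_fun_add
      ((contDiff_fderiv_apply_const hη c).differentiable one_ne_zero z)
      ((contDiff_fderiv_apply_const hχ c).differentiable one_ne_zero z), add_apply]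
  simp only [lap, hsecond]
  ring

lemma exists_isTestFunction_eventuallyEq_one (hK : IsCompact K) (hΩ : IsOpen Ω) (hKΩ : K ⊆ Ω) :
    ∃ χ, IsTestFunction χ Ω ∧ (∀ z, χ z ∈ Icc 0 1) ∧ ∀ z ∈ K, χ =ᶠ[𝓝 z] fun _ => 1 := by
  obtain ⟨L, hL, hKL, hLΩ⟩ := exists_compact_between hK hΩ hKΩ
  obtain ⟨f, hf_one, hf_zero, hf⟩ := exists_contMDiffMap_one_nhds_of_subset_interior (n := 2)
    (modelWithCornersSelf ℝ ℂ) hK.isClosed hKL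
  have htsupport : tsupport f ⊆ L :=
    closure_minimal (fun x hx => by_contra fun h => hx (hf_zero x h)) hL.isClosed
  exact ⟨f, ⟨f.contMDiff.contDiff, hL.of_isClosed_subset (isClosed_tsupport _) htsupport,
    htsupport.trans hLΩ⟩, hf, eventually_nhdsSet_iff_forall.1 hf_one⟩

end TestFunction

section MeasureUniqueness

variable {O K : Set ℂ} {μ ν : Measure ℂ}

lemma measure_le_of_forall_integral_eq (hO : IsOpen O)
    (hμ : ∀ K, IsCompact K → K ⊆ O → μ K < ⊤) (hν : ∀ K, IsCompact K → K ⊆ O → ν K < ⊤)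
    (h : ∀ χ, IsTestFunction χ O → ∫ z, χ z ∂μ = ∫ z, χ z ∂ν)
    (hK : IsCompact K) (hKO : K ⊆ O) : μ K ≤ ν K := by
  obtain ⟨L, hL, hKL, hLO⟩ := exists_compact_between hK hO hKO
  refine le_of_forall_gt fun r hr => ?_
  have : IsFiniteMeasure (ν.restrict L) := ⟨by simpa using hν L hL hLO⟩
  obtain ⟨V, hKV, hV, hVr⟩ := K.exists_isOpen_lt_of_lt (μ := ν.restrict L) r
    ((Measure.restrict_apply_le _ _).trans_lt hr)
  rw [Measure.restrict_apply hV.measurableSet] at hVr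
  obtain ⟨χ, hχ, hχ01, hχK⟩ := exists_isTestFunction_eventuallyEq_one hK
    (hV.inter isOpen_interior) (subset_inter hKV hKL)
  have hsub : V ∩ interior L ⊆ V ∩ L := inter_subset_inter_right V interior_subset
  have hχO := hχ.mono ((hsub.trans inter_subset_right).trans hLO)
  have hχ0 : 0 ≤ χ := fun z => (hχ01 z).1
  calc μ K ≤ ∫⁻ z, ENNReal.ofReal (χ z) ∂μ := by
        rw [← lintegral_indicator_one hK.measurableSet]
        refine lintegral_mono (indicator_le fun z hz => ?_)
        simp [(hχK z hz).self_of_nhds]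
    _ = ∫⁻ z, ENNReal.ofReal (χ z) ∂ν := by
        rw [← ofReal_integral_eq_lintegral_ofReal (hχO.integrable hμ) (ae_of_all _ hχ0), h χ hχO,
          ofReal_integral_eq_lintegral_ofReal (hχO.integrable hν) (ae_of_all _ hχ0)]
    _ ≤ ν (V ∩ L) := by
        rw [← lintegral_indicator_one (hV.measurableSet.inter hL.measurableSet)]
        refine lintegral_mono fun z => ?_
        by_cases hz : z ∈ V ∩ L
        · simpa [hz] using (hχ01 z).2
        · simp [image_eq_zero_of_notMem_tsupport fun h => hz (hsub (hχ.tsupport_subset h))]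
    _ < r := hVr

lemma exists_isCompact_iUnion_eq (hO : IsOpen O) :
    ∃ L : ℕ → Set ℂ, (∀ n, IsCompact (L n)) ∧ (∀ n, L n ⊆ O) ∧ ⋃ n, L n = O := by
  obtain ⟨F, hF, hFO, hFU, hFmono⟩ := hO.exists_iUnion_isClosed
  refine ⟨fun n => F n ∩ closedBall 0 n, fun n => (isCompact_closedBall _ _).inter_left (hF n),
    fun n => inter_subset_left.trans (hFO n), ?_⟩
  have hball : Monotone fun n : ℕ => closedBall (0 : ℂ) n := fun m n hmn =>
    closedBall_subset_closedBall (by exact_mod_cast hmn)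
  rw [iUnion_inter_of_monotone hFmono hball, hFU, iUnion_closedBall_nat, inter_univ]

lemma restrict_eq_of_forall_integral_eq (hO : IsOpen O)
    (hμ : ∀ K, IsCompact K → K ⊆ O → μ K < ⊤) (hν : ∀ K, IsCompact K → K ⊆ O → ν K < ⊤)
    (h : ∀ χ, IsTestFunction χ O → ∫ z, χ z ∂μ = ∫ z, χ z ∂ν) : μ.restrict O = ν.restrict O := by
  obtain ⟨L, hL, hLO, hLU⟩ := exists_isCompact_iUnion_eq hO
  have hcompact (K : Set ℂ) (hK : IsCompact K) (hKO : K ⊆ O) : μ K = ν K :=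
    (measure_le_of_forall_integral_eq hO hμ hν h hK hKO).antisymm
      (measure_le_of_forall_integral_eq hO hν hμ (fun χ hχ => (h χ hχ).symm) hK hKO)
  rw [← hLU, Measure.restrict_iUnion_congr]
  intro n
  have : IsFiniteMeasure (μ.restrict (L n)) := ⟨by simpa using hμ _ (hL n) (hLO n)⟩
  refine ext_of_generate_finite {s : Set ℂ | IsClosed s}
    (by rw [BorelSpace.measurable_eq (α := ℂ), borel_eq_generateFrom_isClosed])
    isPiSystem_isClosed (fun s hs => ?_) (by simpa using hcompact _ (hL n) (hLO n))
  rw [Measure.restrict_apply hs.measurableSet, Measure.restrict_apply hs.measurableSet]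
  exact hcompact _ ((hL n).inter_left hs) (inter_subset_right.trans (hLO n))

end MeasureUniqueness

/-! ### Riemann maps -/

section HolomorphicInverse

variable {f g : ℂ → ℂ} {U : Set ℂ} {z : ℂ}

lemma not_eventually_eq_const_of_injOn (hU : U ∈ 𝓝 z) (hf : InjOn f U) :
    ¬ ∀ᶠ w in 𝓝 z, f w = f z := by
  intro hconst
  have hne : ∀ᶠ _ in 𝓝[≠] z, False := by
    filter_upwards [(hconst.and hU).filter_mono nhdsWithin_le_nhds, self_mem_nhdsWithin]
      with w ⟨hw, hwU⟩ hwz using hwz (hf hwU (mem_of_mem_nhds hU) hw)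
  exact hne.exists.elim fun _ h => h

lemma nhds_le_map_nhds_of_injOn (hU : U ∈ 𝓝 z) (hf : AnalyticAt ℂ f z) (hinj : InjOn f U) :
    𝓝 (f z) ≤ map f (𝓝 z) :=
  hf.eventually_constant_or_nhds_le_map_nhds.resolve_left (not_eventually_eq_const_of_injOn hU hinj)

lemma eventually_deriv_ne_zero_of_injOn (hU : IsOpen U) (hz : z ∈ U) (hf : DifferentiableOn ℂ f U)
    (hinj : InjOn f U) : ∀ᶠ w in 𝓝[≠] z, deriv f w ≠ 0 := by
  have han := hf.analyticAt (hU.mem_nhds hz)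
  refine han.deriv.eventually_eq_zero_or_eventually_ne_zero.resolve_left fun hzero => ?_
  refine not_eventually_eq_const_of_injOn (hU.mem_nhds hz) hinj ?_
  obtain ⟨r, hr, hball⟩ := Metric.eventually_nhds_iff_ball.1 (hzero.and (hU.mem_nhds hz))
  filter_upwards [ball_mem_nhds z hr] with w hw
  exact isOpen_ball.is_const_of_deriv_eq_zero (convex_ball z r).isPreconnected
    (hf.mono fun x hx => (hball x hx).2) (fun x hx => (hball x hx).1) hw (mem_ball_self hr)

lemma continuousAt_of_leftInvOn (hU : IsOpen U) (hz : z ∈ U) (hf : DifferentiableOn ℂ f U)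
    (hg : LeftInvOn g f U) : ContinuousAt g (f z) := by
  rw [ContinuousAt, hg hz]
  refine Tendsto.mono_left ?_ (nhds_le_map_nhds_of_injOn (hU.mem_nhds hz)
    (hf.analyticAt (hU.mem_nhds hz)) hg.injOn)
  refine tendsto_map'_iff.2 (tendsto_id.congr' ?_)
  filter_upwards [hU.mem_nhds hz] with w hw using (hg hw).symm

lemma differentiableAt_of_leftInvOn_of_deriv_ne_zero (hU : IsOpen U) (hz : z ∈ U)
    (hf : DifferentiableOn ℂ f U) (hg : LeftInvOn g f U) (hfz : deriv f z ≠ 0) :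
    DifferentiableAt ℂ g (f z) := by
  have hderiv : HasDerivAt f (deriv f z) (g (f z)) := by
    rw [hg hz]
    exact (hf.differentiableAt (hU.mem_nhds hz)).hasDerivAt
  refine (hderiv.of_local_left_inverse (continuousAt_of_leftInvOn hU hz hf hg) hfz
    ?_).differentiableAt
  filter_upwards [nhds_le_map_nhds_of_injOn (hU.mem_nhds hz) (hf.analyticAt (hU.mem_nhds hz))
    hg.injOn (image_mem_map (hU.mem_nhds hz))]
  rintro _ ⟨w, hw, rfl⟩
  rw [hg hw]

/- Critical points of an injective holomorphic map are isolated, so its inverse, being continuous,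
extends holomorphically across them by Riemann's removable singularity theorem. -/
lemma differentiableAt_of_leftInvOn (hU : IsOpen U) (hz : z ∈ U) (hf : DifferentiableOn ℂ f U)
    (hg : LeftInvOn g f U) : DifferentiableAt ℂ g (f z) := by
  let V := {w ∈ U | w ≠ z → deriv f w ≠ 0}
  have hV : f '' V ∈ 𝓝 (f z) := by
    refine nhds_le_map_nhds_of_injOn (hU.mem_nhds hz) (hf.analyticAt (hU.mem_nhds hz)) hg.injOn
      (image_mem_map ?_)
    exact inter_mem (hU.mem_nhds hz)
      (eventually_nhdsWithin_iff.1 (eventually_deriv_ne_zero_of_injOn hU hz hf hg.injOn))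
  refine ((differentiableOn_compl_singleton_and_continuousAt_iff hV).1
    ⟨?_, continuousAt_of_leftInvOn hU hz hf hg⟩).differentiableAt hV
  rintro _ ⟨⟨w, ⟨hwU, hw⟩, rfl⟩, hwz⟩
  refine (differentiableAt_of_leftInvOn_of_deriv_ne_zero hU hwU hf hg
    (hw ?_)).differentiableWithinAt
  rintro rfl
  exact hwz rfl

end HolomorphicInverse

/-- `φ` is a conformal map of the open set `Ω` onto the unit disc, with inverse `ψ`. -/
structure IsRiemannMap (Ω : Set ℂ) (φ ψ : ℂ → ℂ) : Prop where
  isOpen : IsOpen Ω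
  differentiableOn : DifferentiableOn ℂ φ Ω
  mapsTo : MapsTo φ Ω (ball 0 1)
  differentiableOn_symm : DifferentiableOn ℂ ψ (ball 0 1)
  mapsTo_symm : MapsTo ψ (ball 0 1) Ω
  invOn : InvOn ψ φ Ω (ball 0 1)

lemma AnalyticJordanDomain.exists_isRiemannMap {Ω : Set ℂ} (hΩ : AnalyticJordanDomain Ω) :
    ∃ φ ψ, IsRiemannMap Ω φ ψ ∧ ContinuousOn φ (closure Ω) := by
  obtain ⟨U, ψ, hU, hUball, hψ, hinj, himage, hfrontier⟩ := hΩ.analyticBoundary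
  let φ := Function.invFunOn ψ U
  have hφψ : LeftInvOn φ ψ U := hinj.leftInvOn_invFunOn
  have hballU : ball (0 : ℂ) 1 ⊆ U := ball_subset_closedBall.trans hUball
  have hclosure : closure Ω = ψ '' closedBall 0 1 := by
    rw [closure_eq_self_union_frontier, ← hfrontier, ← himage, ← image_union, ball_union_sphere]
  refine ⟨φ, ψ, ⟨hΩ.isOpen, ?_, ?_, hψ.mono hballU, mapsTo_iff_image_subset.2 himage.subset,
    ?_, hφψ.mono hballU⟩, ?_⟩
  · rw [← himage]
    rintro _ ⟨z, hz, rfl⟩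
    exact (differentiableAt_of_leftInvOn hU (hballU hz) hψ hφψ).differentiableWithinAt
  · rw [← himage]
    rintro _ ⟨z, hz, rfl⟩
    rwa [hφψ (hballU hz)]
  · rw [← himage]
    rintro _ ⟨z, hz, rfl⟩
    rw [hφψ (hballU hz)]
  · rw [hclosure]
    rintro _ ⟨z, hz, rfl⟩
    exact (continuousAt_of_leftInvOn hU (hUball hz) hψ hφψ).continuousWithinAt

namespace IsRiemannMap

variable {Ω : Set ℂ} {φ ψ : ℂ → ℂ} {z : ℂ}

lemma analyticAt (h : IsRiemannMap Ω φ ψ) (hz : z ∈ Ω) : AnalyticAt ℂ φ z :=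
  h.differentiableOn.analyticAt (h.isOpen.mem_nhds hz)

lemma contDiffOn_norm_sq (h : IsRiemannMap Ω φ ψ) : ContDiffOn ℝ 2 (fun z => ‖φ z‖ ^ 2) Ω :=
  fun _ hz => ((h.analyticAt hz).contDiffAt.restrict_scalars ℝ).norm_sq ℝ |>.contDiffWithinAt

lemma norm_lt_one (h : IsRiemannMap Ω φ ψ) (hz : z ∈ Ω) : ‖φ z‖ < 1 :=
  mem_ball_zero_iff.1 (h.mapsTo hz)

lemma norm_sq_lt_one (h : IsRiemannMap Ω φ ψ) (hz : z ∈ Ω) : ‖φ z‖ ^ 2 < 1 :=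
  (sq_lt_one_iff₀ (norm_nonneg _)).2 (h.norm_lt_one hz)

lemma continuousOn_symm (h : IsRiemannMap Ω φ ψ) : ContinuousOn ψ (ball 0 1) :=
  h.differentiableOn_symm.continuousOn

lemma deriv_mul_deriv (h : IsRiemannMap Ω φ ψ) (hz : z ∈ ball (0 : ℂ) 1) :
    deriv φ (ψ z) * deriv ψ z = 1 := by
  have hφ := (h.analyticAt (h.mapsTo_symm hz)).differentiableAt.hasDerivAt
  have hψ := (h.differentiableOn_symm.differentiableAt (isOpen_ball.mem_nhds hz)).hasDerivAt
  refine (hφ.comp z hψ).unique ((hasDerivAt_id z).congr_of_eventuallyEq ?_)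
  filter_upwards [isOpen_ball.mem_nhds hz] with w hw using h.invOn.2 hw

lemma deriv_ne_zero (h : IsRiemannMap Ω φ ψ) (hz : z ∈ ball (0 : ℂ) 1) : deriv φ (ψ z) ≠ 0 :=
  left_ne_zero_of_mul_eq_one (h.deriv_mul_deriv hz)

lemma setOf_norm_le_eq_image (h : IsRiemannMap Ω φ ψ) {ρ : ℝ} (hρ : ρ < 1) :
    {z ∈ Ω | ‖φ z‖ ≤ ρ} = ψ '' closedBall 0 ρ := by
  ext z
  constructor
  · rintro ⟨hz, hzρ⟩
    exact ⟨φ z, mem_closedBall_zero_iff.2 hzρ, h.invOn.1 hz⟩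
  · rintro ⟨w, hw, rfl⟩
    have hw' := closedBall_subset_ball hρ hw
    exact ⟨h.mapsTo_symm hw', by rwa [h.invOn.2 hw', ← mem_closedBall_zero_iff]⟩

lemma isCompact_setOf_norm_le (h : IsRiemannMap Ω φ ψ) {ρ : ℝ} (hρ : ρ < 1) :
    IsCompact {z ∈ Ω | ‖φ z‖ ≤ ρ} := by
  rw [h.setOf_norm_le_eq_image hρ]
  exact (isCompact_closedBall 0 ρ).image_of_continuousOn
    (h.continuousOn_symm.mono (closedBall_subset_ball hρ))

lemma exists_forall_norm_sq_le (h : IsRiemannMap Ω φ ψ) {K : Set ℂ} (hK : IsCompact K)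
    (hKΩ : K ⊆ Ω) {c : ℝ} (hc : c < 1) : ∃ a ∈ Ico c 1, ∀ z ∈ K, ‖φ z‖ ^ 2 ≤ a := by
  rcases K.eq_empty_or_nonempty with rfl | hKne
  · exact ⟨c, ⟨le_rfl, hc⟩, by simp⟩
  · obtain ⟨z₀, hz₀, hmax⟩ :=
      hK.exists_isMaxOn hKne (h.contDiffOn_norm_sq.continuousOn.mono hKΩ)
    exact ⟨max c (‖φ z₀‖ ^ 2), ⟨le_max_left _ _, max_lt hc (h.norm_sq_lt_one (hKΩ hz₀))⟩,
      fun z hz => le_max_of_le_right (hmax hz)⟩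

end IsRiemannMap

/-! ### Ring potentials -/

/-- A smooth nondecreasing step rising from `0` at `a` to `1` at `b`. -/
def smoothStep (a b x : ℝ) : ℝ :=
  Real.smoothTransition ((x - a) / (b - a))

section SmoothStep

variable {a b x : ℝ}

lemma contDiff_smoothStep {n : ℕ∞} : ContDiff ℝ n (smoothStep a b) :=
  Real.smoothTransition.contDiff.comp ((contDiff_id.sub contDiff_const).div_const _)

lemma smoothStep_mem_Icc : smoothStep a b x ∈ Icc 0 1 :=
  ⟨Real.smoothTransition.nonneg _, Real.smoothTransition.le_one _⟩

lemma smoothStep_of_le (hab : a < b) (hx : x ≤ a) : smoothStep a b x = 0 :=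
  Real.smoothTransition.zero_of_nonpos
    (div_nonpos_of_nonpos_of_nonneg (sub_nonpos.2 hx) (sub_pos.2 hab).le)

lemma smoothStep_of_ge (hab : a < b) (hx : b ≤ x) : smoothStep a b x = 1 :=
  Real.smoothTransition.one_of_one_le ((one_le_div (sub_pos.2 hab)).2 (by linarith))

lemma continuous_deriv_smoothStep : Continuous (deriv (smoothStep a b)) :=
  (contDiff_smoothStep (n := 1)).continuous_deriv le_rfl

lemma deriv_smoothStep_nonneg (hab : a < b) : 0 ≤ deriv (smoothStep a b) x :=
  Monotone.deriv_nonneg (Real.smoothTransition.monotone.comp fun x y hxy => by gcongr)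

lemma deriv_smoothStep_of_le (hab : a < b) (hx : x ≤ a) : deriv (smoothStep a b) x = 0 :=
  IsLocalMin.deriv_eq_zero <| Eventually.of_forall fun _ => by
    rw [smoothStep_of_le hab hx]
    exact smoothStep_mem_Icc.1

lemma deriv_smoothStep_of_ge (hab : a < b) (hx : b ≤ x) : deriv (smoothStep a b) x = 0 :=
  IsLocalMax.deriv_eq_zero <| Eventually.of_forall fun _ => by
    rw [smoothStep_of_ge hab hx]
    exact smoothStep_mem_Icc.2

lemma exists_deriv_smoothStep_pos (hab : a < b) : ∃ x ∈ Ioo a b, 0 < deriv (smoothStep a b) x := by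
  obtain ⟨x, hx, hslope⟩ := exists_deriv_eq_slope (smoothStep a b) hab
    (contDiff_smoothStep (n := 1)).continuous.continuousOn
    (contDiff_smoothStep.differentiable (n := 1) one_ne_zero).differentiableOn
  refine ⟨x, hx, ?_⟩
  rw [hslope, smoothStep_of_ge hab le_rfl, smoothStep_of_le hab le_rfl]
  exact div_pos (by norm_num) (sub_pos.2 hab)

end SmoothStep

/-- The radial potential of `τ`, in the variable `x = |z|²`: for `τ` vanishing near `0`, the
function `z ↦ radialPotential τ (|z|²)` has Laplacian `-4 τ'(|z|²)`. -/
def radialPotential (τ : ℝ → ℝ) (x : ℝ) : ℝ :=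
  ∫ t in x..1, τ t / t

section RadialPotential

variable {τ : ℝ → ℝ} {δ x : ℝ}

lemma contDiff_div_self {n : ℕ∞} (hδ : 0 < δ) (hτδ : ∀ t ≤ δ, τ t = 0) (hτ : ContDiff ℝ n τ) :
    ContDiff ℝ n fun t => τ t / t := by
  refine contDiff_iff_contDiffAt.2 fun t => ?_
  rcases lt_or_ge t δ with ht | ht
  · refine (contDiffAt_const (c := (0 : ℝ))).congr_of_eventuallyEq ?_
    filter_upwards [Iio_mem_nhds ht] with s hs
    rw [hτδ s (le_of_lt hs), zero_div]
  · exact hτ.contDiffAt.div contDiffAt_id (hδ.trans_le ht).ne'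

lemma hasDerivAt_radialPotential (hτ : Continuous fun t => τ t / t) :
    HasDerivAt (radialPotential τ) (-(τ x / x)) x :=
  intervalIntegral.integral_hasDerivAt_left (hτ.intervalIntegrable _ _)
    (hτ.stronglyMeasurableAtFilter _ _) hτ.continuousAt

lemma contDiff_radialPotential (hτ : ContDiff ℝ 1 fun t => τ t / t) :
    ContDiff ℝ 2 (radialPotential τ) := by
  have hderiv : deriv (radialPotential τ) = fun x => -(τ x / x) :=
    funext fun _ => (hasDerivAt_radialPotential hτ.continuous).deriv
  refine contDiff_succ_iff_deriv (n := 1).2 ⟨fun x =>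
    (hasDerivAt_radialPotential hτ.continuous).differentiableAt, by simp, ?_⟩
  rw [hderiv]
  exact hτ.neg

lemma radialPotential_of_ge (hτ : ∀ t, x ≤ t → τ t = 0) (hx : x ≤ 1) : radialPotential τ x = 0 := by
  refine intervalIntegral.integral_zero_ae (Eventually.of_forall fun t ht => ?_)
  rw [uIoc_of_le hx] at ht
  rw [hτ t ht.1.le, zero_div]

lemma radialPotential_le (hδ : 0 < δ) (hτδ : ∀ t ≤ δ, τ t = 0) (hτ : ∀ t, τ t ≤ 1)
    (hτc : Continuous fun t => τ t / t) (hx : x ≤ 1) : radialPotential τ x ≤ δ⁻¹ * (1 - x) := by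
  have hbound (t : ℝ) : τ t / t ≤ δ⁻¹ := by
    rcases le_total t δ with ht | ht
    · rw [hτδ t ht, zero_div]
      positivity
    · calc τ t / t ≤ 1 / t := by gcongr; exacts [(hδ.trans_le ht).le, hτ t]
        _ ≤ δ⁻¹ := by rw [one_div]; gcongr
  calc radialPotential τ x ≤ ∫ _ in x..1, δ⁻¹ :=
        intervalIntegral.integral_mono_on hx (hτc.intervalIntegrable _ _)
          intervalIntegrable_const fun t _ => hbound t
    _ = δ⁻¹ * (1 - x) := by rw [intervalIntegral.integral_const, smul_eq_mul, mul_comm]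

lemma lap_radialPotential_norm_sq {g : ℂ → ℂ} {z : ℂ} (hδ : 0 < δ) (hτδ : ∀ t ≤ δ, τ t = 0)
    (hτ : ContDiff ℝ 1 τ) (hg : AnalyticAt ℂ g z) :
    lap (fun w => radialPotential τ (‖g w‖ ^ 2)) z =
      -(4 * ‖deriv g z‖ ^ 2 * deriv τ (‖g z‖ ^ 2)) := by
  set N := ‖g z‖ ^ 2
  have hτd : ContDiff ℝ 1 fun t => τ t / t := contDiff_div_self hδ hτδ hτ
  have hquot : HasDerivAt (fun t => τ t / t) (deriv (fun t => τ t / t) N) N :=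
    (hτd.differentiable one_ne_zero N).hasDerivAt
  have hmul : τ = fun t => t * (τ t / t) := by
    ext t
    rcases eq_or_ne t 0 with rfl | ht
    · simpa using hτδ 0 hδ.le
    · field_simp
  have hderiv : deriv τ N = τ N / N + N * deriv (fun t => τ t / t) N := by
    conv_lhs => rw [hmul]
    simpa using ((hasDerivAt_id' N).fun_mul hquot).deriv
  rw [lap_comp_norm_sq hg (Eventually.of_forall fun x => hasDerivAt_radialPotential hτd.continuous)
    hquot.neg, hderiv]
  ring

end RadialPotential

/-- A smooth cutoff function, equal to `1` between `1/4` and `a` and to `0` off `[1/8, b]`. -/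
def annularCutoff (a b x : ℝ) : ℝ :=
  smoothStep (1 / 8) (1 / 4) x - smoothStep a b x

section AnnularCutoff

variable {a b x : ℝ}

lemma contDiff_annularCutoff {n : ℕ∞} : ContDiff ℝ n (annularCutoff a b) :=
  contDiff_smoothStep.sub contDiff_smoothStep

lemma annularCutoff_of_le (ha : 1 / 8 ≤ a) (hab : a < b) (hx : x ≤ 1 / 8) :
    annularCutoff a b x = 0 := by
  rw [annularCutoff, smoothStep_of_le (by norm_num) hx, smoothStep_of_le hab (hx.trans ha),
    sub_zero]

lemma annularCutoff_of_ge (hb : 1 / 4 ≤ b) (hab : a < b) (hx : b ≤ x) :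
    annularCutoff a b x = 0 := by
  rw [annularCutoff, smoothStep_of_ge (by norm_num) (hb.trans hx), smoothStep_of_ge hab hx,
    sub_self]

lemma annularCutoff_mem_Icc (ha : 1 / 4 ≤ a) (hab : a < b) : annularCutoff a b x ∈ Icc 0 1 := by
  rw [annularCutoff]
  rcases le_total x (1 / 4) with hx | hx
  · rw [smoothStep_of_le hab (hx.trans ha), sub_zero]
    exact smoothStep_mem_Icc
  · rw [smoothStep_of_ge (by norm_num) hx]
    exact ⟨sub_nonneg.2 smoothStep_mem_Icc.2, sub_le_self _ smoothStep_mem_Icc.1⟩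

lemma deriv_annularCutoff :
    deriv (annularCutoff a b) x = deriv (smoothStep (1 / 8) (1 / 4)) x - deriv (smoothStep a b) x :=
  deriv_fun_sub (contDiff_smoothStep.differentiable (n := 1) one_ne_zero x)
    (contDiff_smoothStep.differentiable (n := 1) one_ne_zero x)

end AnnularCutoff

/-- The pullback under `φ` of a radial density on the disc that is carried by the ring
`a ≤ |w|² ≤ b` and has total mass `4π`. -/
def ringDensity (φ : ℂ → ℂ) (a b : ℝ) (z : ℂ) : ℝ :=
  4 * ‖deriv φ z‖ ^ 2 * deriv (smoothStep a b) (‖φ z‖ ^ 2)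

/-- A potential on `Ω` whose Laplacian is the difference of the ring densities of
`a ≤ |φ|² ≤ b` and of the fixed ring `1/8 ≤ |φ|² ≤ 1/4`. -/
def ringPotential (Ω : Set ℂ) (φ : ℂ → ℂ) (a b : ℝ) : ℂ → ℝ :=
  Ω.indicator fun z => radialPotential (annularCutoff a b) (‖φ z‖ ^ 2)

section Ring

variable {Ω : Set ℂ} {φ ψ : ℂ → ℂ} {a b : ℝ} {z : ℂ}

lemma ringDensity_nonneg (hab : a < b) : 0 ≤ ringDensity φ a b z :=
  mul_nonneg (by positivity) (deriv_smoothStep_nonneg hab)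

lemma ringDensity_of_le (hab : a < b) (hz : ‖φ z‖ ^ 2 ≤ a) : ringDensity φ a b z = 0 := by
  rw [ringDensity, deriv_smoothStep_of_le hab hz, mul_zero]

lemma ringDensity_of_ge (hab : a < b) (hz : b ≤ ‖φ z‖ ^ 2) : ringDensity φ a b z = 0 := by
  rw [ringDensity, deriv_smoothStep_of_ge hab hz, mul_zero]

lemma continuousOn_ringDensity (h : IsRiemannMap Ω φ ψ) : ContinuousOn (ringDensity φ a b) Ω :=
  (continuousOn_const.mul ((h.differentiableOn.deriv h.isOpen).continuousOn.norm.pow 2)).mul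
    (continuous_deriv_smoothStep.comp_continuousOn h.contDiffOn_norm_sq.continuousOn)

lemma ringPotential_eventuallyEq (hΩ : IsOpen Ω) (hz : z ∈ Ω) : ringPotential Ω φ a b =ᶠ[𝓝 z]
    fun w => radialPotential (annularCutoff a b) (‖φ w‖ ^ 2) := by
  filter_upwards [hΩ.mem_nhds hz] with w hw using indicator_of_mem hw _

lemma tsupport_ringPotential_subset (h : IsRiemannMap Ω φ ψ) (hb4 : 1 / 4 ≤ b) (hab : a < b)
    (hb : b < 1) : tsupport (ringPotential Ω φ a b) ⊆ {z ∈ Ω | ‖φ z‖ ≤ √b} := by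
  have hsqrt : √b < 1 := (Real.sqrt_lt' one_pos).2 (by simpa using hb)
  refine closure_minimal (fun z hz => ?_) (h.isCompact_setOf_norm_le hsqrt).isClosed
  have hzΩ : z ∈ Ω := mem_of_indicator_ne_zero hz
  refine ⟨hzΩ, Real.le_sqrt_of_sq_le (le_of_not_gt fun hbz => hz ?_)⟩
  rw [ringPotential, indicator_of_mem hzΩ, radialPotential_of_ge (fun t ht =>
    annularCutoff_of_ge hb4 hab (hbz.le.trans ht)) (h.norm_sq_lt_one hzΩ).le]

lemma isTestFunction_ringPotential (h : IsRiemannMap Ω φ ψ) (ha : 1 / 4 ≤ a) (hab : a < b)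
    (hb : b < 1) : IsTestFunction (ringPotential Ω φ a b) Ω := by
  have hsub := tsupport_ringPotential_subset h (ha.trans hab.le) hab hb
  have hsqrt : √b < 1 := (Real.sqrt_lt' one_pos).2 (by simpa using hb)
  refine ⟨contDiff_iff_contDiffAt.2 fun z => ?_, (h.isCompact_setOf_norm_le
    hsqrt).of_isClosed_subset (isClosed_tsupport _) hsub, fun z hz => (hsub hz).1⟩
  by_cases hz : z ∈ tsupport (ringPotential Ω φ a b)
  · have hzΩ := (hsub hz).1
    refine ContDiffAt.congr_of_eventuallyEq ?_ (ringPotential_eventuallyEq h.isOpen hzΩ)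
    exact (contDiff_radialPotential (contDiff_div_self (by norm_num) (fun t =>
      annularCutoff_of_le (by linarith) hab) contDiff_annularCutoff)).contDiffAt.comp z
      (h.contDiffOn_norm_sq.contDiffAt (h.isOpen.mem_nhds hzΩ))
  · exact contDiffAt_const.congr_of_eventuallyEq (notMem_tsupport_iff_eventuallyEq.1 hz)

lemma lap_ringPotential (h : IsRiemannMap Ω φ ψ) (ha : 1 / 4 ≤ a) (hab : a < b) (hz : z ∈ Ω) :
    lap (ringPotential Ω φ a b) z = ringDensity φ a b z - ringDensity φ (1 / 8) (1 / 4) z := by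
  rw [lap_congr_of_eventuallyEq (ringPotential_eventuallyEq h.isOpen hz),
    lap_radialPotential_norm_sq (δ := 1 / 8) (by norm_num)
      (fun t => annularCutoff_of_le (by linarith) hab) contDiff_annularCutoff (h.analyticAt hz),
    deriv_annularCutoff, ringDensity, ringDensity]
  ring

lemma ringPotential_le (h : IsRiemannMap Ω φ ψ) (ha : 1 / 4 ≤ a) (hab : a < b) (hz : z ∈ Ω) :
    ringPotential Ω φ a b z ≤ 8 * (1 - ‖φ z‖ ^ 2) := by
  rw [ringPotential, indicator_of_mem hz]
  have hcut (t : ℝ) : t ≤ 1 / 8 → annularCutoff a b t = 0 :=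
    annularCutoff_of_le (by linarith) hab
  refine (radialPotential_le (by norm_num) hcut (fun _ => (annularCutoff_mem_Icc ha hab).2)
    (contDiff_div_self (n := 1) (by norm_num) hcut contDiff_annularCutoff).continuous
    (h.norm_sq_lt_one hz).le).trans_eq (by norm_num)

end Ring

/-! ### Monge–Ampère measures -/

section RieszMeasure

variable {Ω S O : Set ℂ} {w w' v : ℂ → ℝ} {ν ν' : Measure ℂ}

namespace IsRieszMeasure

lemma ae_mem (hν : IsRieszMeasure w Ω ν) : ∀ᵐ z ∂ν, z ∈ Ω := mem_ae_iff.2 hν.1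

lemma integral_eq {η : ℂ → ℝ} (hν : IsRieszMeasure w Ω ν) (hη : IsTestFunction η Ω) :
    ∫ z, η z ∂ν = 4⁻¹ * ∫ z in Ω, w z * lap η z :=
  hν.2 η hη.contDiff hη.hasCompactSupport hη.tsupport_subset

/- The hypotheses of a Riesz measure only constrain Bochner integrals, which are `0` when undefined;
the test function `η` of positive integral is therefore integrable, and adding it to a
non-integrable test function would give two incompatible values. -/
lemma measure_lt_top_of_isCompact (hΩ : IsOpen Ω) (hw : ContinuousOn w Ω)
    (hν : IsRieszMeasure w Ω ν) {η : ℂ → ℝ} (hη : IsTestFunction η Ω)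
    (hpos : 0 < ∫ z in Ω, w z * lap η z) {K : Set ℂ} (hK : IsCompact K) (hKΩ : K ⊆ Ω) :
    ν K < ⊤ := by
  obtain ⟨χ, hχ, -, hχK⟩ := exists_isTestFunction_eventuallyEq_one hK hΩ hKΩ
  have hη_int : Integrable η ν := by
    refine Integrable.of_integral_ne_zero ?_
    rw [hν.integral_eq hη]
    positivity
  have hχ_int : Integrable χ ν := by
    by_contra h
    have hadd : ¬ Integrable (fun z => χ z + η z) ν := fun hsum =>
      h ((hsum.sub hη_int).congr (ae_of_all _ fun z => add_sub_cancel_right _ _))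
    have hχ_zero := hν.integral_eq hχ
    have hadd_zero := hν.integral_eq (hχ.add hη)
    simp only [lap_add hχ.contDiff hη.contDiff, mul_add] at hadd_zero
    rw [integral_undef hadd, integral_add (hχ.integrable_mul_lap hΩ hw).integrableOn
      (hη.integrable_mul_lap hΩ hw).integrableOn] at hadd_zero
    rw [integral_undef h] at hχ_zero
    linarith
  calc ν K = ∫⁻ z, K.indicator 1 z ∂ν := (lintegral_indicator_one hK.measurableSet).symm
    _ ≤ ∫⁻ z, ‖χ z‖ₑ ∂ν := by
        refine lintegral_mono fun z => ?_
        by_cases hz : z ∈ K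
        · simp [hz, (hχK z hz).self_of_nhds]
        · simp [hz]
    _ < ⊤ := hχ_int.hasFiniteIntegral

lemma restrict_eq_of_eqOn (hΩ : IsOpen Ω) (hO : IsOpen O) (hOΩ : O ⊆ Ω) (hw : EqOn w w' O)
    (hν : IsRieszMeasure w Ω ν) (hν' : IsRieszMeasure w' Ω ν')
    (hν_fin : ∀ K, IsCompact K → K ⊆ Ω → ν K < ⊤)
    (hν'_fin : ∀ K, IsCompact K → K ⊆ Ω → ν' K < ⊤) : ν.restrict O = ν'.restrict O := by
  refine restrict_eq_of_forall_integral_eq hO (fun K hK hKO => hν_fin K hK (hKO.trans hOΩ))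
    (fun K hK hKO => hν'_fin K hK (hKO.trans hOΩ)) fun χ hχ => ?_
  rw [hν.integral_eq (hχ.mono hOΩ), hν'.integral_eq (hχ.mono hOΩ)]
  congr 1
  refine setIntegral_congr_fun hΩ.measurableSet fun z _ => ?_
  by_cases hz : z ∈ tsupport (lap χ)
  · simp only [hw (hχ.tsupport_lap_subset hz)]
  · simp only [image_eq_zero_of_notMem_tsupport hz, mul_zero]

lemma restrict_compl_eq (hΩ : IsOpen Ω) (hS : IsClosed S) (hw : EqOn w w' (Ω \ S))
    (hν : IsRieszMeasure w Ω ν) (hν' : IsRieszMeasure w' Ω ν')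
    (hν_fin : ∀ K, IsCompact K → K ⊆ Ω → ν K < ⊤)
    (hν'_fin : ∀ K, IsCompact K → K ⊆ Ω → ν' K < ⊤) : ν.restrict Sᶜ = ν'.restrict Sᶜ := by
  have hcompl {m : Measure ℂ} (hm : ∀ᵐ z ∂m, z ∈ Ω) : m.restrict Sᶜ = m.restrict (Ω \ S) :=
    Measure.restrict_congr_set (by
      filter_upwards [hm] with z hz using propext ⟨fun h => ⟨hz, h⟩, fun h => h.2⟩)
  rw [hcompl hν.ae_mem, hcompl hν'.ae_mem]
  exact restrict_eq_of_eqOn hΩ (hΩ.sdiff hS) sdiff_subset hw hν hν' hν_fin hν'_fin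

lemma setIntegral_eq_add (hΩ : IsOpen Ω) (hS : IsCompact S) (hSΩ : S ⊆ Ω)
    (hw : ContinuousOn w Ω) (hw' : ContinuousOn w' Ω) (hww' : EqOn w w' (Ω \ S))
    (hν : IsRieszMeasure w Ω ν) (hν' : IsRieszMeasure w' Ω ν')
    (hν_fin : ∀ K, IsCompact K → K ⊆ Ω → ν K < ⊤)
    (hν'_fin : ∀ K, IsCompact K → K ⊆ Ω → ν' K < ⊤) (hv : ContDiffOn ℝ 2 v Ω) :
    ∫ z in S, v z ∂ν' = ∫ z in S, v z ∂ν + 4⁻¹ * ∫ z in Ω, (w' z - w z) * lap v z := by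
  obtain ⟨χ, hχ, -, hχS⟩ := exists_isTestFunction_eventuallyEq_one hS hΩ hSΩ
  have hχv := hχ.mul_contDiffOn hΩ hv
  have hsplit {m : Measure ℂ} (hm : ∀ K, IsCompact K → K ⊆ Ω → m K < ⊤) :
      ∫ z, χ z * v z ∂m = ∫ z in S, v z ∂m + ∫ z in Sᶜ, χ z * v z ∂m := by
    rw [← integral_add_compl hS.measurableSet (hχv.integrable hm)]
    congr 1
    refine setIntegral_congr_fun hS.measurableSet fun z hz => ?_
    simp only [(hχS z hz).self_of_nhds, one_mul]
  have hlap : ∫ z in Ω, (w' z - w z) * lap v z =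
      ∫ z in Ω, (w' z * lap (fun z => χ z * v z) z - w z * lap (fun z => χ z * v z) z) := by
    refine setIntegral_congr_fun hΩ.measurableSet fun z hz => ?_
    by_cases hzS : z ∈ S
    · have hloc : (fun z => χ z * v z) =ᶠ[𝓝 z] v := by
        filter_upwards [hχS z hzS] with y hy
        rw [hy, one_mul]
      simp only [lap_congr_of_eventuallyEq hloc, sub_mul]
    · simp only [hww' ⟨hz, hzS⟩, sub_self, zero_mul]
  have hν_eq := hν.integral_eq hχv
  have hν'_eq := hν'.integral_eq hχv
  rw [hsplit hν_fin,
    restrict_compl_eq hΩ hS.isClosed hww' hν hν' hν_fin hν'_fin] at hν_eq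
  rw [hsplit hν'_fin] at hν'_eq
  rw [hlap, integral_sub (hχv.integrable_mul_lap hΩ hw').integrableOn
    (hχv.integrable_mul_lap hΩ hw).integrableOn]
  linarith

end IsRieszMeasure

end RieszMeasure

section RingPotential

variable {Ω : Set ℂ} {φ ψ : ℂ → ℂ} {w : ℂ → ℝ} {a b : ℝ} {z : ℂ}

lemma mul_lap_ringPotential_nonneg (h : IsRiemannMap Ω φ ψ) (ha : 1 / 4 ≤ a) (hab : a < b)
    (hcore : ∀ z ∈ Ω, ‖φ z‖ ^ 2 ≤ 1 / 4 → w z < 0) (hring : ∀ z ∈ Ω, a < ‖φ z‖ ^ 2 → 0 ≤ w z)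
    (hz : z ∈ Ω) : 0 ≤ w z * lap (ringPotential Ω φ a b) z := by
  rw [lap_ringPotential h ha hab hz]
  rcases le_or_gt (‖φ z‖ ^ 2) (1 / 4) with hφ | hφ
  · rw [ringDensity_of_le hab (hφ.trans ha), zero_sub]
    exact mul_nonneg_of_nonpos_of_nonpos (hcore z hz hφ).le
      (neg_nonpos.2 (ringDensity_nonneg (by norm_num)))
  · rw [ringDensity_of_ge (by norm_num) hφ.le, sub_zero]
    rcases le_or_gt (‖φ z‖ ^ 2) a with hφa | hφa
    · rw [ringDensity_of_le hab hφa, mul_zero]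
    · exact mul_nonneg (hring z hz hφa) (ringDensity_nonneg hab)

lemma integral_mul_lap_ringPotential_pos (h : IsRiemannMap Ω φ ψ) (ha : 1 / 4 ≤ a) (hab : a < b)
    (hb : b < 1) (hw : ContinuousOn w Ω) (hcore : ∀ z ∈ Ω, ‖φ z‖ ^ 2 ≤ 1 / 4 → w z < 0)
    (hring : ∀ z ∈ Ω, a < ‖φ z‖ ^ 2 → 0 ≤ w z) :
    0 < ∫ z, w z * lap (ringPotential Ω φ a b) z := by
  have hη := isTestFunction_ringPotential h ha hab hb
  obtain ⟨x, ⟨hx8, hx4⟩, hx⟩ := exists_deriv_smoothStep_pos (a := 1 / 8) (b := 1 / 4) (by norm_num)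
  have hsqrt : ‖((√x : ℝ) : ℂ)‖ = √x := Complex.norm_of_nonneg (Real.sqrt_nonneg x)
  have hmem : ((√x : ℝ) : ℂ) ∈ ball (0 : ℂ) 1 := by
    rw [mem_ball_zero_iff, hsqrt, Real.sqrt_lt' one_pos]
    linarith
  refine (continuous_mul_of_tsupport_subset h.isOpen hw (continuous_lap hη.contDiff)
    hη.tsupport_lap_subset).integral_pos_of_hasCompactSupport_nonneg_nonzero (x := ψ (√x : ℝ))
    (hasCompactSupport_lap hη.hasCompactSupport).mul_left (fun z => ?_) ?_
  · by_cases hz : z ∈ Ω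
    · exact mul_lap_ringPotential_nonneg h ha hab hcore hring hz
    · simp [image_eq_zero_of_notMem_tsupport fun hmem => hz (hη.tsupport_lap_subset hmem)]
  · have hzΩ := h.mapsTo_symm hmem
    have hφ : ‖φ (ψ (√x : ℝ))‖ ^ 2 = x := by
      rw [h.invOn.2 hmem, hsqrt, Real.sq_sqrt (by linarith)]
    have hderiv := h.deriv_ne_zero hmem
    rw [lap_ringPotential h ha hab hzΩ, ringDensity_of_le hab (by linarith), ringDensity, hφ,
      zero_sub]
    exact mul_ne_zero (hcore _ hzΩ (hφ.trans_le hx4.le)).ne (neg_ne_zero.2 (by positivity))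

end RingPotential

namespace IsExhaustion

variable {Ω A : Set ℂ} {u : ℂ → ℝ} {φ ψ : ℂ → ℂ} {r c : ℝ}

lemma continuousOn_max (hu : IsExhaustion u Ω) : ContinuousOn (fun z => max (u z) r) Ω :=
  hu.subh.1.sup continuousOn_const

lemma isCompact_setOf_le (hu : IsExhaustion u Ω) (hr : r < 0) : IsCompact {z ∈ Ω | u z ≤ r} := by
  obtain ⟨hcompact, hsub⟩ := hu.exh (r / 2) (by linarith)
  have hset : {z ∈ Ω | u z ≤ r} = closure {z ∈ Ω | u z < r / 2} ∩ u ⁻¹' Iic r :=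
    Subset.antisymm (fun z hz => ⟨subset_closure ⟨hz.1, by linarith [hz.2]⟩, hz.2⟩)
      fun z hz => ⟨hsub hz.1, hz.2⟩
  rw [hset]
  exact hcompact.of_isClosed_subset
    ((hu.subh.1.mono hsub).preimage_isClosed_of_isClosed hcompact.isClosed isClosed_Iic)
    inter_subset_left

lemma integrableOn {E : Type*} [NormedAddCommGroup E] {g : ℂ → E} {m : Measure ℂ}
    (hu : IsExhaustion u Ω) (hr : r < 0) (hm : m {z ∈ Ω | u z ≤ r} < ⊤) (hg : ContinuousOn g Ω)
    (hA : A ⊆ {z ∈ Ω | u z ≤ r}) : IntegrableOn g A m := by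
  have hS := hu.isCompact_setOf_le hr
  have hgS := hg.mono (sep_subset Ω fun z => u z ≤ r)
  obtain ⟨B, hB⟩ := hS.exists_bound_of_continuousOn hgS
  exact (IntegrableOn.of_bound hm (hgS.aestronglyMeasurable_of_isCompact hS hS.measurableSet) B
    (ae_restrict_of_forall_mem hS.measurableSet hB)).mono_set hA

lemma exists_forall_neg_le (hu : IsExhaustion u Ω) (h : IsRiemannMap Ω φ ψ) (hc : 0 < c) :
    ∃ a ∈ Ico (1 / 4 : ℝ) 1, ∀ z ∈ Ω, a < ‖φ z‖ ^ 2 → -c ≤ u z := by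
  obtain ⟨hcompact, hsub⟩ := hu.exh (-c) (neg_lt_zero.2 hc)
  obtain ⟨a, ha, hmax⟩ := h.exists_forall_norm_sq_le hcompact hsub (c := 1 / 4) (by norm_num)
  refine ⟨a, ha, fun z hz hza => not_lt.1 fun hlt => hza.not_ge ?_⟩
  exact hmax z (subset_closure ⟨hz, hlt⟩)

lemma exists_forall_max_lt_neg (hu : IsExhaustion u Ω) (h : IsRiemannMap Ω φ ψ) (hr : r < 0) :
    ∃ c > 0, ∀ z ∈ Ω, ‖φ z‖ ^ 2 ≤ 1 / 4 → max (u z) r < -c := by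
  have hsub := sep_subset Ω fun z => ‖φ z‖ ≤ 1 / 2
  obtain ⟨m, hm, hbound⟩ := (h.isCompact_setOf_norm_le one_half_lt_one).exists_forall_le'
    (hu.continuousOn_max.mono hsub).neg (a := 0) fun z hz => neg_pos.2 (max_lt (hu.neg z hz.1) hr)
  refine ⟨m / 2, half_pos hm, fun z hz hφ => ?_⟩
  have : m ≤ -max (u z) r := hbound z ⟨hz, by nlinarith [norm_nonneg (φ z)]⟩
  linarith

lemma exists_isTestFunction_integral_max_pos (hu : IsExhaustion u Ω) (h : IsRiemannMap Ω φ ψ)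
    (hr : r < 0) : ∃ η, IsTestFunction η Ω ∧ 0 < ∫ z in Ω, max (u z) r * lap η z := by
  obtain ⟨c, hc, hcore⟩ := hu.exists_forall_max_lt_neg h hr
  obtain ⟨a, ⟨ha, ha1⟩, hring⟩ := hu.exists_forall_neg_le h hc
  obtain ⟨b, hab, hb⟩ := exists_between ha1
  have hη : IsTestFunction (ringPotential Ω φ a b) Ω := isTestFunction_ringPotential h ha hab hb
  refine ⟨_, hη, ?_⟩
  calc 0 < ∫ z, (max (u z) r + c) * lap (ringPotential Ω φ a b) z :=
        integral_mul_lap_ringPotential_pos h ha hab hb (hu.continuousOn_max.add continuousOn_const)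
          (fun z hz hφ => by linarith [hcore z hz hφ])
          fun z hz hφ => by linarith [hring z hz hφ, le_max_left (u z) r]
    _ = ∫ z in Ω, max (u z) r * lap (ringPotential Ω φ a b) z := by
        rw [setIntegral_mul_of_tsupport_subset hη.tsupport_lap_subset]
        simp only [add_mul]
        rw [integral_add (hη.integrable_mul_lap h.isOpen hu.continuousOn_max)
          (hη.integrable_mul_lap h.isOpen continuousOn_const), integral_const_mul,
          hη.integral_lap, mul_zero, add_zero]

end IsExhaustion

section SubMeasure

variable {X : Type*} [MeasurableSpace X] {α β γ : Measure X} {v : X → ℝ}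

lemma measure_add_sub_add_right [IsFiniteMeasure α] [IsFiniteMeasure β] [IsFiniteMeasure γ] :
    α + γ - (β + γ) = α - β := by
  refine le_antisymm (Measure.sub_le_of_le_add ?_) (Measure.sub_le_of_le_add ?_)
  · rw [← add_assoc]
    gcongr
    exact Measure.sub_le_iff_le_add.1 le_rfl
  · have hle : α + γ ≤ α + γ - (β + γ) + β + γ := by
      rw [add_assoc _ β]
      exact Measure.sub_le_iff_le_add.1 le_rfl
    exact Measure.le_iff.2 fun s hs => ENNReal.le_of_add_le_add_right (measure_ne_top γ s)
      (Measure.le_iff.1 hle s hs)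

lemma integral_le_integral_sub_measure_add [IsFiniteMeasure α] [IsFiniteMeasure β]
    (hα : Integrable v α) (hβ : Integrable v β) (hvα : 0 ≤ᵐ[α] v) (hvβ : 0 ≤ᵐ[β] v) :
    ∫ x, v x ∂α ≤ ∫ x, v x ∂(α - β) + ∫ x, v x ∂β := by
  have hαβ := hα.mono_measure (Measure.sub_le (ν := β))
  rw [← integral_add_measure hαβ hβ]
  exact integral_mono_measure (Measure.sub_le_iff_le_add.1 le_rfl)
    (ae_add_measure_iff.2 ⟨ae_mono Measure.sub_le hvα, hvβ⟩) (hαβ.add_measure hβ)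

end SubMeasure

/-- Nonnegative subharmonic functions of class `C²`, the class of functions against which the
Monge–Ampère measures are compared. -/
structure IsNonnegSubharmonic (v : ℂ → ℝ) (Ω : Set ℂ) : Prop where
  contDiffOn : ContDiffOn ℝ 2 v Ω
  nonneg : ∀ z ∈ Ω, 0 ≤ v z
  lap_nonneg : ∀ z ∈ Ω, 0 ≤ lap v z

/-- The properties of the family `μ_{u,r}`, `r < 0`, of Monge–Ampère measures on which the theory of
Poletsky–Stessin Hardy spaces rests: uniformly bounded masses, concentration on `{u ≤ r}`,
monotonicity on nonnegative subharmonic functions, and the lower bound coming from the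
Lelong–Jensen formula. -/
structure IsMongeAmpereFamily (Ω : Set ℂ) (u : ℂ → ℝ) (μ : ℝ → Measure ℂ) : Prop where
  exists_measure_univ_le : ∃ T : NNReal, ∀ r < 0, μ r univ ≤ T
  ae_mem : ∀ r < 0, ∀ᵐ z ∂μ r, z ∈ {z ∈ Ω | u z ≤ r}
  integral_mono : ∀ v, IsNonnegSubharmonic v Ω → ∀ r r', r < r' → r' < 0 →
    ∫ z, v z ∂μ r ≤ ∫ z, v z ∂μ r'
  integral_mul_lap_le : ∀ v, IsNonnegSubharmonic v Ω → ∀ r < 0,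
    4⁻¹ * ∫ z in Ω, (max (u z) r - u z) * lap v z ≤ ∫ z, v z ∂μ r

section MongeAmpere

variable {Ω K : Set ℂ} {u v : ℂ → ℝ} {φ ψ : ℂ → ℂ} {r r' : ℝ} {ν νr νr' μ : Measure ℂ}

lemma IsRieszMeasure.measure_lt_top_of_max (hνr : IsRieszMeasure (fun z => max (u z) r) Ω νr)
    (hu : IsExhaustion u Ω) (h : IsRiemannMap Ω φ ψ) (hr : r < 0) (hK : IsCompact K)
    (hKΩ : K ⊆ Ω) : νr K < ⊤ := by
  obtain ⟨η, hη, hpos⟩ := hu.exists_isTestFunction_integral_max_pos h hr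
  exact hνr.measure_lt_top_of_isCompact h.isOpen hu.continuousOn_max hη hpos hK hKΩ

lemma eqOn_max_diff_setOf_le : EqOn u (fun z => max (u z) r) (Ω \ {z ∈ Ω | u z ≤ r}) :=
  fun _ hz => (max_eq_left (not_le.1 fun hle => hz.2 ⟨hz.1, hle⟩).le).symm

lemma IsRieszMeasure.measure_setOf_le_eq (hνr : IsRieszMeasure (fun z => max (u z) r) Ω νr)
    (hu : IsExhaustion u Ω) (h : IsRiemannMap Ω φ ψ) (hr : r < 0) (hν : IsRieszMeasure u Ω ν)
    [IsFiniteMeasure ν] : νr {z ∈ Ω | u z ≤ r} = ν {z ∈ Ω | u z ≤ r} := by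
  have hS := hu.isCompact_setOf_le hr
  have hlap (z : ℂ) : lap (fun _ => (1 : ℝ)) z = 0 := by simp [lap]
  have hmass := IsRieszMeasure.setIntegral_eq_add (v := fun _ => 1) h.isOpen hS
    (sep_subset _ _) hu.subh.1 hu.continuousOn_max eqOn_max_diff_setOf_le hν hνr
    (fun _ _ _ => measure_lt_top ν _) (fun _ => hνr.measure_lt_top_of_max hu h hr)
    contDiffOn_const
  simp only [hlap, mul_zero, integral_zero, add_zero, setIntegral_const, smul_eq_mul,
    mul_one] at hmass
  exact (measureReal_eq_measureReal_iff
    (hνr.measure_lt_top_of_max hu h hr hS (sep_subset _ _)).ne).1 hmass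

lemma IsMAMeasure.exists_eq_restrict_sub_restrict (hμ : IsMAMeasure u Ω ν r μ)
    (hu : IsExhaustion u Ω) (h : IsRiemannMap Ω φ ψ) (hr : r < 0) (hν : IsRieszMeasure u Ω ν)
    [IsFiniteMeasure ν] : ∃ νr, IsRieszMeasure (fun z => max (u z) r) Ω νr ∧
      μ = νr.restrict {z ∈ Ω | u z ≤ r} - ν.restrict {z ∈ Ω | u z = r} := by
  obtain ⟨νr, hνr, rfl⟩ := hμ
  refine ⟨νr, hνr, ?_⟩
  set S := {z ∈ Ω | u z ≤ r} with hS_def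
  have hS : IsCompact S := hu.isCompact_setOf_le hr
  have hSfin := hνr.measure_lt_top_of_max hu h hr hS (sep_subset _ _)
  have : IsFiniteMeasure (νr.restrict S) := ⟨by simpa using hSfin⟩
  have hνr_split : νr = νr.restrict S + ν.restrict (Ω \ S) := by
    conv_lhs => rw [← Measure.restrict_add_restrict_compl (μ := νr) hS.measurableSet]
    rw [IsRieszMeasure.restrict_compl_eq h.isOpen hS.isClosed eqOn_max_diff_setOf_le.symm hνr hν
      (fun _ => hνr.measure_lt_top_of_max hu h hr) fun _ _ _ => measure_lt_top ν _]
    congr 1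
    exact Measure.restrict_congr_set (by
      filter_upwards [hν.ae_mem] with z hz using propext ⟨fun h => ⟨hz, h⟩, fun h => h.2⟩)
  have hν_split : ν.restrict {z ∈ Ω | r ≤ u z} =
      ν.restrict {z ∈ Ω | u z = r} + ν.restrict (Ω \ S) := by
    rw [← Measure.restrict_union _ (h.isOpen.sdiff hS.isClosed).measurableSet]
    · congr 1
      ext z
      simp only [hS_def, mem_union, Set.mem_sdiff, mem_ofPred_eq, le_iff_lt_or_eq]
      grind
    · exact disjoint_left.2 fun z hz hzS => hzS.2 ⟨hz.1, hz.2.le⟩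
  conv_lhs => rw [hνr_split, hν_split]
  exact measure_add_sub_add_right

variable [IsFiniteMeasure ν]

lemma setIntegral_max_le_integral_sub_add (hu : IsExhaustion u Ω) (hr : r < 0)
    (hνr_fin : νr {z ∈ Ω | u z ≤ r} < ⊤) (hνr : ∀ᵐ z ∂νr, z ∈ Ω) (hν : ∀ᵐ z ∂ν, z ∈ Ω)
    (hv : IsNonnegSubharmonic v Ω) :
    ∫ z in {z ∈ Ω | u z ≤ r}, v z ∂νr ≤
      ∫ z, v z ∂(νr.restrict {z ∈ Ω | u z ≤ r} - ν.restrict {z ∈ Ω | u z = r}) +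
        ∫ z in {z ∈ Ω | u z = r}, v z ∂ν := by
  have : IsFiniteMeasure (νr.restrict {z ∈ Ω | u z ≤ r}) := ⟨by simpa using hνr_fin⟩
  exact integral_le_integral_sub_measure_add
    (hu.integrableOn hr hνr_fin hv.contDiffOn.continuousOn subset_rfl)
    (hu.integrableOn hr (measure_lt_top ν _) hv.contDiffOn.continuousOn
      fun z hz => ⟨hz.1, hz.2.le⟩)
    (ae_restrict_of_ae (hνr.mono hv.nonneg)) (ae_restrict_of_ae (hν.mono hv.nonneg))

lemma setIntegral_max_mono (hu : IsExhaustion u Ω) (h : IsRiemannMap Ω φ ψ) (hrr' : r < r')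
    (hr' : r' < 0) (hν : IsRieszMeasure u Ω ν)
    (hνr : IsRieszMeasure (fun z => max (u z) r) Ω νr)
    (hνr' : IsRieszMeasure (fun z => max (u z) r') Ω νr') (hv : IsNonnegSubharmonic v Ω) :
    ∫ z in {z ∈ Ω | u z ≤ r}, v z ∂νr + ∫ z in {z ∈ Ω | u z = r'}, v z ∂ν ≤
      ∫ z in {z ∈ Ω | u z ≤ r'}, v z ∂νr' := by
  have hr : r < 0 := hrr'.trans hr'
  have hνr_fin (K : Set ℂ) := hνr.measure_lt_top_of_max hu h hr (K := K)
  have hS := hu.isCompact_setOf_le hr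
  have hS' := hu.isCompact_setOf_le hr'
  have hsub : {z ∈ Ω | u z ≤ r} ⊆ {z ∈ Ω | u z ≤ r'} := fun z hz => ⟨hz.1, hz.2.trans hrr'.le⟩
  have hsub' : {z ∈ Ω | u z = r'} ⊆ {z ∈ Ω | u z ≤ r'} := fun z hz => ⟨hz.1, hz.2.le⟩
  have hint {A : Set ℂ} (hA : A ⊆ {z ∈ Ω | u z ≤ r'}) : IntegrableOn v A νr :=
    hu.integrableOn hr' (hνr_fin _ hS' (sep_subset _ _)) hv.contDiffOn.continuousOn hA
  have hdisj : Disjoint {z ∈ Ω | u z = r'} {z ∈ Ω | u z ≤ r} :=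
    disjoint_left.2 fun z hz hz' => by linarith [hz.2, hz'.2]
  have hlevel : ν.restrict {z ∈ Ω | u z = r'} = νr.restrict {z ∈ Ω | u z = r'} :=
    Measure.restrict_congr_mono (fun z hz => mem_compl fun hz' => by linarith [hz.2, hz'.2])
      (hν.restrict_compl_eq h.isOpen hS.isClosed eqOn_max_diff_setOf_le hνr
        (fun _ _ _ => measure_lt_top ν _) hνr_fin)
  have hdiff : 0 ≤ ∫ z in Ω, (max (u z) r' - max (u z) r) * lap v z :=
    setIntegral_nonneg h.isOpen.measurableSet fun z hz =>
      mul_nonneg (sub_nonneg.2 (max_le_max le_rfl hrr'.le)) (hv.lap_nonneg z hz)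
  calc ∫ z in {z ∈ Ω | u z ≤ r}, v z ∂νr + ∫ z in {z ∈ Ω | u z = r'}, v z ∂ν
      = ∫ z in {z ∈ Ω | u z = r'} ∪ {z ∈ Ω | u z ≤ r}, v z ∂νr := by
        rw [setIntegral_union hdisj hS.measurableSet (hint hsub') (hint hsub), hlevel, add_comm]
    _ ≤ ∫ z in {z ∈ Ω | u z ≤ r'}, v z ∂νr :=
        setIntegral_mono_set (hint subset_rfl) (ae_restrict_of_ae (hνr.ae_mem.mono hv.nonneg))
          (union_subset hsub' hsub).eventuallyLE
    _ ≤ ∫ z in {z ∈ Ω | u z ≤ r'}, v z ∂νr' := by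
        have := hνr.setIntegral_eq_add h.isOpen hS' (sep_subset _ _) hu.continuousOn_max
          hu.continuousOn_max (fun z hz => ?_) hνr' hνr_fin
          (fun _ => hνr'.measure_lt_top_of_max hu h hr') hv.contDiffOn
        · linarith
        · have hlt : r' < u z := not_le.1 fun hle => hz.2 ⟨hz.1, hle⟩
          simp only [max_eq_left hlt.le, max_eq_left (hrr'.trans hlt).le]

lemma isMongeAmpereFamily (hu : IsExhaustion u Ω) (h : IsRiemannMap Ω φ ψ)
    (hν : IsRieszMeasure u Ω ν) {μ : ℝ → Measure ℂ}
    (hμ : ∀ r < 0, IsMAMeasure u Ω ν r (μ r)) : IsMongeAmpereFamily Ω u μ := by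
  choose! νr hνr hμ_eq using fun r hr =>
    (hμ r hr).exists_eq_restrict_sub_restrict hu h hr hν
  have hνr_fin (r : ℝ) (hr : r < 0) : νr r {z ∈ Ω | u z ≤ r} < ⊤ :=
    (hνr r hr).measure_lt_top_of_max hu h hr (hu.isCompact_setOf_le hr) (sep_subset _ _)
  have hμ_le (r : ℝ) (hr : r < 0) : μ r ≤ (νr r).restrict {z ∈ Ω | u z ≤ r} :=
    (hμ_eq r hr).trans_le Measure.sub_le
  have hlower (v : ℂ → ℝ) (hv : IsNonnegSubharmonic v Ω) (r : ℝ) (hr : r < 0) :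
      ∫ z in {z ∈ Ω | u z ≤ r}, v z ∂νr r ≤ ∫ z, v z ∂μ r + ∫ z in {z ∈ Ω | u z = r}, v z ∂ν := by
    rw [hμ_eq r hr]
    exact setIntegral_max_le_integral_sub_add hu hr (hνr_fin r hr) (hνr r hr).ae_mem hν.ae_mem hv
  refine ⟨⟨(ν univ).toNNReal, fun r hr => ?_⟩, fun r hr => ?_, fun v hv r r' hrr' hr' => ?_,
    fun v hv r hr => ?_⟩
  · rw [ENNReal.coe_toNNReal (measure_ne_top ν univ)]
    refine (hμ_le r hr univ).trans ?_
    rw [Measure.restrict_apply_univ, (hνr r hr).measure_setOf_le_eq hu h hr hν]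
    exact measure_mono (subset_univ _)
  · exact ae_mono (hμ_le r hr) (ae_restrict_mem (hu.isCompact_setOf_le hr).measurableSet)
  · have hr : r < 0 := hrr'.trans hr'
    have hupper := integral_mono_measure (hμ_le r hr)
      (ae_restrict_of_ae ((hνr r hr).ae_mem.mono hv.nonneg))
      (hu.integrableOn hr (hνr_fin r hr) hv.contDiffOn.continuousOn subset_rfl)
    linarith [hlower v hv r' hr', setIntegral_max_mono hu h hrr' hr' hν (hνr r hr) (hνr r' hr') hv]
  · have hlevel : ∫ z in {z ∈ Ω | u z = r}, v z ∂ν ≤ ∫ z in {z ∈ Ω | u z ≤ r}, v z ∂ν :=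
      setIntegral_mono_set
        (hu.integrableOn hr (measure_lt_top ν _) hv.contDiffOn.continuousOn subset_rfl)
        (ae_restrict_of_ae (hν.ae_mem.mono hv.nonneg))
        (LE.le.eventuallyLE fun z hz => ⟨hz.1, hz.2.le⟩)
    linarith [hlower v hv r hr, hν.setIntegral_eq_add h.isOpen (hu.isCompact_setOf_le hr)
      (sep_subset _ _) hu.subh.1 hu.continuousOn_max eqOn_max_diff_setOf_le (hνr r hr)
      (fun _ _ _ => measure_lt_top ν _) (fun _ => (hνr r hr).measure_lt_top_of_max hu h hr)
      hv.contDiffOn]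

end MongeAmpere

section PowerMeans

variable {Ω : Set ℂ} {u : ℂ → ℝ} {μ : ℝ → Measure ℂ} {f : ℂ → ℂ} {q δ r r' : ℝ}

lemma isNonnegSubharmonic_norm_sq_add_rpow (hΩ : IsOpen Ω) (hf : DifferentiableOn ℂ f Ω)
    (hq : 0 < q) (hδ : 0 < δ) : IsNonnegSubharmonic (fun z => (‖f z‖ ^ 2 + δ) ^ q) Ω where
  contDiffOn :=
    (((((hf.contDiffOn hΩ).restrict_scalars ℝ).norm_sq ℝ).add contDiffOn_const).rpow_const_of_ne
      fun z _ => by positivity)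
  nonneg z _ := by positivity
  lap_nonneg z hz := by
    have hpos : 0 < ‖f z‖ ^ 2 + δ := by positivity
    have hderiv (s : ℝ) {x : ℝ} (hx : 0 < x + δ) :
        HasDerivAt (fun x => (x + δ) ^ s) (s * (x + δ) ^ (s - 1)) x := by
      simpa using ((hasDerivAt_id x).add_const δ).rpow_const (p := s) (Or.inl hx.ne')
    have hnear : ∀ᶠ x in 𝓝 (‖f z‖ ^ 2), 0 < x + δ :=
      (continuous_id.add continuous_const).continuousAt.eventually (lt_mem_nhds hpos)
    rw [lap_comp_norm_sq (hf.analyticAt (hΩ.mem_nhds hz)) (hnear.mono fun x hx => hderiv q hx)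
      ((hderiv (q - 1) hpos).const_mul q)]
    have hfactor : (‖f z‖ ^ 2 + δ) ^ (q - 1) = (‖f z‖ ^ 2 + δ) ^ (q - 1 - 1) * (‖f z‖ ^ 2 + δ) := by
      rw [← Real.rpow_add_one hpos.ne', sub_add_cancel]
    calc (0 : ℝ) ≤ 4 * ‖deriv f z‖ ^ 2 *
          (q * (‖f z‖ ^ 2 + δ) ^ (q - 1 - 1) * (q * ‖f z‖ ^ 2 + δ)) := by positivity
      _ = _ := by rw [hfactor]; ring

lemma IsMongeAmpereFamily.integrable {E : Type*} [NormedAddCommGroup E] {g : ℂ → E}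
    (hM : IsMongeAmpereFamily Ω u μ) (hu : IsExhaustion u Ω) (hg : ContinuousOn g Ω)
    (hr : r < 0) : Integrable g (μ r) := by
  obtain ⟨T, hT⟩ := hM.exists_measure_univ_le
  rw [← Measure.restrict_eq_self_of_ae_mem (hM.ae_mem r hr)]
  exact hu.integrableOn hr
    ((measure_mono (subset_univ _)).trans_lt ((hT r hr).trans_lt ENNReal.coe_lt_top)) hg subset_rfl

lemma IsMongeAmpereFamily.tendsto_integral_norm_sq_add_rpow (hM : IsMongeAmpereFamily Ω u μ)
    (hu : IsExhaustion u Ω) (hf : ContinuousOn f Ω) (hq : 0 < q) (hr : r < 0) :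
    Tendsto (fun δ => ∫ z, (‖f z‖ ^ 2 + δ) ^ (q / 2) ∂μ r) (𝓝[>] 0)
      (𝓝 (∫ z, ‖f z‖ ^ q ∂μ r)) := by
  have hint {δ : ℝ} : Integrable (fun z => (‖f z‖ ^ 2 + δ) ^ (q / 2)) (μ r) :=
    hM.integrable hu (((hf.norm.pow 2).add continuousOn_const).rpow_const
      fun z _ => Or.inr (by positivity)) hr
  refine tendsto_integral_filter_of_dominated_convergence (fun z => (‖f z‖ ^ 2 + 1) ^ (q / 2))
    (.of_forall fun δ => hint.aestronglyMeasurable) ?_ hint (ae_of_all _ fun z => ?_)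
  · filter_upwards [Ioo_mem_nhdsGT one_pos] with δ ⟨hδ, hδ1⟩
    refine ae_of_all _ fun z => ?_
    rw [Real.norm_of_nonneg (by positivity)]
    gcongr
  · have hcont : ContinuousAt (fun δ : ℝ => (‖f z‖ ^ 2 + δ) ^ (q / 2)) 0 :=
      (continuousAt_const.add continuousAt_id).rpow_const (Or.inr (by positivity))
    have hzero : (‖f z‖ ^ 2 + 0) ^ (q / 2) = ‖f z‖ ^ q := by
      rw [add_zero, ← Real.rpow_natCast, ← Real.rpow_mul (norm_nonneg _), Nat.cast_ofNat,
        mul_div_cancel₀ q two_ne_zero]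
    exact hzero ▸ hcont.tendsto.mono_left nhdsWithin_le_nhds

lemma IsMongeAmpereFamily.integral_norm_rpow_mono (hM : IsMongeAmpereFamily Ω u μ)
    (hu : IsExhaustion u Ω) (hΩ : IsOpen Ω) (hf : DifferentiableOn ℂ f Ω) (hq : 0 < q)
    (hrr' : r ≤ r') (hr' : r' < 0) : ∫ z, ‖f z‖ ^ q ∂μ r ≤ ∫ z, ‖f z‖ ^ q ∂μ r' := by
  rcases hrr'.eq_or_lt with rfl | hlt
  · rfl
  refine le_of_tendsto_of_tendsto
    (hM.tendsto_integral_norm_sq_add_rpow hu hf.continuousOn hq (hlt.trans hr'))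
    (hM.tendsto_integral_norm_sq_add_rpow hu hf.continuousOn hq hr') ?_
  filter_upwards [self_mem_nhdsWithin] with δ hδ
  exact hM.integral_mono _ (isNonnegSubharmonic_norm_sq_add_rpow hΩ hf (half_pos hq) hδ) r r'
    hlt hr'

end PowerMeans

/-! ### Boundary growth and circle averages -/

section HopfLemma

open InnerProductSpace

variable {Ω K V : Set ℂ} {u q : ℂ → ℝ} {φ ψ : ℂ → ℂ} {z : ℂ} {ρ ε m : ℝ}

lemma circleAverage_norm_sq (hρ : 0 ≤ ρ) :
    Real.circleAverage (fun w => ‖w‖ ^ 2) z ρ = ‖z‖ ^ 2 + ρ ^ 2 := by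
  have hanalytic (w : ℂ) :
      AnalyticAt ℂ (fun w => 2 * (starRingEnd ℂ) z * w + (ρ ^ 2 - ‖z‖ ^ 2)) w := by
    fun_prop
  calc Real.circleAverage (fun w => ‖w‖ ^ 2) z ρ
      = Real.circleAverage (fun w => (2 * (starRingEnd ℂ) z * w + (ρ ^ 2 - ‖z‖ ^ 2)).re) z ρ := by
        refine Real.circleAverage_congr_sphere fun w hw => ?_
        rw [abs_of_nonneg hρ, mem_sphere, dist_eq] at hw
        have hexpand : ρ ^ 2 = ‖w‖ ^ 2 - 2 * ((starRingEnd ℂ) z * w).re + ‖z‖ ^ 2 := by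
          rw [← hw, norm_sub_sq_real, Complex.inner]
          simp [mul_comm]
        norm_cast
        rw [add_re, ofReal_re, mul_assoc, ← ofReal_ofNat, re_ofReal_mul, hexpand]
        ring
    _ = (2 * (starRingEnd ℂ) z * z + (ρ ^ 2 - ‖z‖ ^ 2)).re :=
        InnerProductSpace.HarmonicOnNhd.circleAverage_eq fun w _ => (hanalytic w).harmonicAt_re
    _ = ‖z‖ ^ 2 + ρ ^ 2 := by
        rw [mul_assoc, ← normSq_eq_conj_mul_self, normSq_eq_norm_sq]
        norm_cast
        ring

lemma SubharmonicOn.le_circleAverage (hu : SubharmonicOn u Ω) (hz : z ∈ Ω) (hρ : 0 < ρ)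
    (hball : closedBall z ρ ⊆ Ω) : u z ≤ Real.circleAverage u z ρ :=
  hu.2 z hz ρ hρ hball

lemma SubharmonicOn.not_isLocalMax_sub_add_norm_sq (hu : SubharmonicOn u Ω) (hΩ : IsOpen Ω)
    (hz : z ∈ Ω) (hq : HarmonicAt q z) (hε : 0 < ε) :
    ¬ IsLocalMax (fun w => u w - q w + ε * ‖w‖ ^ 2) z := by
  intro hmax
  obtain ⟨ρ, hρ, hball⟩ := nhds_basis_closedBall.mem_iff.1
    (inter_mem (hΩ.mem_nhds hz) (inter_mem ((isOpen_setOfPred_harmonicAt q).mem_nhds hq) hmax))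
  have hsphere : sphere z ρ ⊆ closedBall z ρ := sphere_subset_closedBall
  have hu_int : CircleIntegrable u z ρ := ContinuousOn.circleIntegrable hρ.le
    (hu.1.mono fun w hw => (hball (hsphere hw)).1)
  have hq_int : CircleIntegrable q z ρ := ContinuousOn.circleIntegrable hρ.le
    fun w hw => (hball (hsphere hw)).2.1.1.continuousAt.continuousWithinAt
  have hnorm_int : CircleIntegrable (fun w => ε • ‖w‖ ^ 2) z ρ :=
    ContinuousOn.circleIntegrable hρ.le (by fun_prop)
  refine lt_irrefl (u z - q z + ε * ‖z‖ ^ 2) ?_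
  calc u z - q z + ε * ‖z‖ ^ 2 < u z - q z + ε * (‖z‖ ^ 2 + ρ ^ 2) := by
        gcongr
        exact lt_add_of_pos_right _ (by positivity)
    _ ≤ Real.circleAverage u z ρ - Real.circleAverage q z ρ +
          ε • Real.circleAverage (fun w => ‖w‖ ^ 2) z ρ := by
        rw [circleAverage_norm_sq hρ.le, smul_eq_mul,
          InnerProductSpace.HarmonicOnNhd.circleAverage_eq fun w hw =>
            (hball (abs_of_pos hρ ▸ hw)).2.1]
        gcongr
        exact hu.le_circleAverage hz hρ fun w hw => (hball hw).1
    _ = Real.circleAverage (u - q + fun w => ε • ‖w‖ ^ 2) z ρ := by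
        rw [Real.circleAverage_add (hu_int.sub hq_int) hnorm_int, Real.circleAverage_fun_smul,
          Real.circleAverage_sub hu_int hq_int]
    _ ≤ u z - q z + ε * ‖z‖ ^ 2 :=
        Real.circleAverage_mono_on_of_le_circle ((hu_int.sub hq_int).add hnorm_int)
          fun w hw => (hball (hsphere (abs_of_pos hρ ▸ hw))).2.2

lemma SubharmonicOn.le_of_forall_mem_diff_le (hu : SubharmonicOn u Ω) (hV : IsOpen V)
    (hVK : V ⊆ K) (hK : IsCompact K) (hKΩ : K ⊆ Ω) (hΩ : IsOpen Ω) (hq : ContinuousOn q K)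
    (hqV : HarmonicOnNhd q V) (hle : ∀ w ∈ K \ V, u w ≤ q w) (hz : z ∈ K) : u z ≤ q z := by
  by_contra! hlt
  obtain ⟨R, hR⟩ := hK.exists_bound_of_continuousOn (f := fun w => ‖w‖ ^ 2) (by fun_prop)
  obtain ⟨ε, hε, hεR⟩ := exists_pos_mul_lt (sub_pos.2 hlt) R
  obtain ⟨w, hw, hmax⟩ := hK.exists_isMaxOn ⟨z, hz⟩
    (f := fun w => u w - q w + ε * ‖w‖ ^ 2) (((hu.1.mono hKΩ).sub hq).add (by fun_prop))
  by_cases hwV : w ∈ V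
  · exact hu.not_isLocalMax_sub_add_norm_sq hΩ (hKΩ hw) (hqV w hwV) hε
      (hmax.isLocalMax (mem_of_superset (hV.mem_nhds hwV) hVK))
  · have hzw : u z - q z + ε * ‖z‖ ^ 2 ≤ u w - q w + ε * ‖w‖ ^ 2 := hmax hz
    have hw_le : ε * ‖w‖ ^ 2 ≤ ε * R := by
      gcongr
      exact (le_abs_self _).trans (hR w hw)
    have hz_nonneg : 0 ≤ ε * ‖z‖ ^ 2 := by positivity
    linarith [hle w ⟨hw, hwV⟩]

lemma SubharmonicOn.le_mul_log_sub_log (hu : SubharmonicOn u Ω) (h : IsRiemannMap Ω φ ψ)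
    (hneg : ∀ z ∈ Ω, u z ≤ 0) (hm : 0 ≤ m) (hcore : ∀ z ∈ Ω, ‖φ z‖ ≤ 1 / 2 → u z ≤ -m) {t : ℝ}
    (ht : t < 1) (hz : z ∈ Ω) (hφz : 1 / 2 ≤ ‖φ z‖) (hzt : ‖φ z‖ ≤ t) :
    u z ≤ m * (Real.log ‖φ z‖ - Real.log t) := by
  have hcont : ContinuousOn (fun w => ‖φ w‖) Ω := h.differentiableOn.continuousOn.norm
  have hlog_t : Real.log t ≤ 0 := Real.log_nonpos (by linarith) ht.le
  have hlog_half : -1 ≤ Real.log (1 / 2) := by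
    linarith [Real.one_sub_inv_le_log_of_pos one_half_pos]
  refine hu.le_of_forall_mem_diff_le (K := {w ∈ Ω | ‖φ w‖ ≤ t} ∩ {w | 1 / 2 ≤ ‖φ w‖})
    (V := {w ∈ Ω | ‖φ w‖ ∈ Ioo (1 / 2) t}) (q := fun w => m * (Real.log ‖φ w‖ - Real.log t))
    (hcont.isOpen_inter_preimage h.isOpen isOpen_Ioo)
    (fun w ⟨hw, hφ⟩ => ⟨⟨hw, hφ.2.le⟩, hφ.1.le⟩) ?_ (fun w hw => hw.1.1) h.isOpen ?_ ?_ ?_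
    ⟨⟨hz, hzt⟩, hφz⟩
  · have hcompact := h.isCompact_setOf_norm_le ht
    exact hcompact.of_isClosed_subset ((hcont.mono (sep_subset _ _)).preimage_isClosed_of_isClosed
      hcompact.isClosed isClosed_Ici) inter_subset_left
  · refine continuousOn_const.mul (ContinuousOn.sub ?_ continuousOn_const)
    exact (hcont.mono fun w hw => hw.1.1).log fun w hw => (one_half_pos.trans_le hw.2).ne'
  · exact fun w ⟨hw, hφ⟩ => (((h.analyticAt hw).harmonicAt_log_norm
      (norm_pos_iff.1 (one_half_pos.trans hφ.1))).add (harmonicAt_const (-Real.log t))).const_smul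
  · rintro w ⟨⟨⟨hw, hwt⟩, hφ⟩, hwV⟩
    rcases hwt.eq_or_lt with heq | hlt
    · simpa only [heq, sub_self, mul_zero] using hneg w hw
    · have heq : ‖φ w‖ = 1 / 2 := hφ.antisymm' (not_lt.1 fun hgt => hwV ⟨hw, hgt, hlt⟩)
      rw [heq]
      nlinarith [hcore w hw heq.le]

/- Hopf's lemma, by comparison with a multiple of the Green function `log ‖φ‖`. -/
lemma IsExhaustion.exists_forall_le_neg_mul (hu : IsExhaustion u Ω) (h : IsRiemannMap Ω φ ψ) :
    ∃ c > 0, ∀ z ∈ Ω, u z ≤ -c * (1 - ‖φ z‖ ^ 2) := by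
  obtain ⟨m, hm, hcore⟩ := hu.exists_forall_max_lt_neg h neg_one_lt_zero
  have hcore' (z : ℂ) (hz : z ∈ Ω) (hφ : ‖φ z‖ ≤ 1 / 2) : u z ≤ -m :=
    (le_max_left _ _).trans (hcore z hz (by nlinarith [norm_nonneg (φ z)])).le
  refine ⟨m / 2, half_pos hm, fun z hz => ?_⟩
  rcases le_total ‖φ z‖ (1 / 2) with hφ | hφ
  · nlinarith [hcore' z hz hφ, sq_nonneg ‖φ z‖]
  have hlim : Tendsto (fun t => m * (Real.log ‖φ z‖ - Real.log t)) (𝓝[<] 1)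
      (𝓝 (m * Real.log ‖φ z‖)) := by
    have hcont : ContinuousAt (fun t => m * (Real.log ‖φ z‖ - Real.log t)) 1 := by
      fun_prop (disch := norm_num)
    simpa using hcont.tendsto.mono_left nhdsWithin_le_nhds
  have hgreen : u z ≤ m * Real.log ‖φ z‖ := by
    refine ge_of_tendsto hlim ?_
    filter_upwards [Ioo_mem_nhdsLT (h.norm_lt_one hz)] with t ⟨hzt, ht⟩
    exact hu.subh.le_mul_log_sub_log h (fun w hw => (hu.neg w hw).le) hm.le hcore' ht hz hφ hzt.le
  have hlog : 2 * Real.log ‖φ z‖ ≤ ‖φ z‖ ^ 2 - 1 := by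
    have := Real.log_le_sub_one_of_pos (x := ‖φ z‖ ^ 2) (by positivity)
    rwa [Real.log_pow, Nat.cast_ofNat] at this
  nlinarith

end HopfLemma

section RingAverages

variable {Ω K : Set ℂ} {φ ψ : ℂ → ℂ} {u v η w : ℂ → ℝ} {μ : ℝ → Measure ℂ} {a b c N r : ℝ}

lemma continuousOn_lap (hΩ : IsOpen Ω) (hv : ContDiffOn ℝ 2 v Ω) : ContinuousOn (lap v) Ω := by
  intro z hz
  obtain ⟨χ, hχ, -, hχ_one⟩ :=
    exists_isTestFunction_eventuallyEq_one isCompact_singleton hΩ (singleton_subset_iff.2 hz)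
  have heq : ∀ᶠ w in 𝓝 z, lap v w = lap (fun z => χ z * v z) w := by
    filter_upwards [(hχ_one z rfl).eventuallyEq_nhds] with w hw
    refine lap_congr_of_eventuallyEq ?_
    filter_upwards [hw] with ζ hζ
    rw [hζ, one_mul]
  exact ((continuous_lap (hχ.mul_contDiffOn hΩ hv).contDiff).continuousAt.congr
    (heq.mono fun _ hw => hw.symm)).continuousWithinAt

lemma integrableOn_of_continuousOn_of_eqOn_zero (hK : IsCompact K) (hKΩ : K ⊆ Ω)
    (hw : ContinuousOn w Ω) (hzero : ∀ z ∈ Ω \ K, w z = 0) (hΩ : MeasurableSet Ω) :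
    IntegrableOn w Ω :=
  ((hw.mono hKΩ).integrableOn_compact hK).of_forall_sdiff_eq_zero hΩ hzero

lemma integrableOn_mul_ringDensity (h : IsRiemannMap Ω φ ψ) (hab : a < b) (hb : b < 1)
    (hv : ContinuousOn v Ω) : IntegrableOn (fun z => v z * ringDensity φ a b z) Ω := by
  have hsqrt : √b < 1 := (Real.sqrt_lt' one_pos).2 (by simpa using hb)
  refine integrableOn_of_continuousOn_of_eqOn_zero (h.isCompact_setOf_norm_le hsqrt)
    (sep_subset _ _) (hv.mul (continuousOn_ringDensity h)) (fun z ⟨hz, hφ⟩ => ?_)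
    h.isOpen.measurableSet
  have hlt : √b < ‖φ z‖ := not_le.1 fun hle => hφ ⟨hz, hle⟩
  rw [ringDensity_of_ge hab ((Real.sqrt_le_left (norm_nonneg _)).1 hlt.le), mul_zero]

lemma IsExhaustion.integrableOn_max_sub_mul (hu : IsExhaustion u Ω) (hΩ : IsOpen Ω) (hr : r < 0)
    (hw : ContinuousOn w Ω) : IntegrableOn (fun z => (max (u z) r - u z) * w z) Ω := by
  refine integrableOn_of_continuousOn_of_eqOn_zero (hu.isCompact_setOf_le hr) (sep_subset _ _)
    ((hu.continuousOn_max.sub hu.subh.1).mul hw) (fun z ⟨hz, hur⟩ => ?_) hΩ.measurableSet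
  have hlt : r < u z := not_le.1 fun hle => hur ⟨hz, hle⟩
  rw [max_eq_left hlt.le, sub_self, zero_mul]

lemma IsExhaustion.exists_forall_le_mul_max_sub (hu : IsExhaustion u Ω) (hc : 0 < c)
    (hη : IsTestFunction η Ω) (hηu : ∀ z ∈ Ω, η z ≤ -c * u z) :
    ∃ r < 0, ∀ z ∈ Ω, η z ≤ 2 * c * (max (u z) r - u z) := by
  obtain ⟨m, hm, hbound⟩ := hη.hasCompactSupport.exists_forall_le'
    (hu.subh.1.mono hη.tsupport_subset).neg (a := 0)
    fun z hz => neg_pos.2 (hu.neg z (hη.tsupport_subset hz))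
  refine ⟨-(m / 2), by linarith, fun z hz => ?_⟩
  by_cases hzη : z ∈ tsupport η
  · have hum : m ≤ -u z := hbound z hzη
    nlinarith [hηu z hz, le_max_right (u z) (-(m / 2))]
  · rw [image_eq_zero_of_notMem_tsupport hzη]
    nlinarith [le_max_left (u z) (-(m / 2))]

lemma IsMongeAmpereFamily.integral_lap_mul_le (hM : IsMongeAmpereFamily Ω u μ)
    (hu : IsExhaustion u Ω) (h : IsRiemannMap Ω φ ψ) (hv : IsNonnegSubharmonic v Ω)
    (hN : ∀ r < 0, ∫ z, v z ∂μ r ≤ N) (hc : 0 < c) (hη : IsTestFunction η Ω)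
    (hηu : ∀ z ∈ Ω, η z ≤ -c * u z) : ∫ z in Ω, lap v z * η z ≤ 8 * c * N := by
  obtain ⟨r, hr, hle⟩ := hu.exists_forall_le_mul_max_sub hc hη hηu
  have hlap := continuousOn_lap h.isOpen hv.contDiffOn
  calc ∫ z in Ω, lap v z * η z
      ≤ ∫ z in Ω, 2 * c * ((max (u z) r - u z) * lap v z) := by
        refine setIntegral_mono_on ?_ ((hu.integrableOn_max_sub_mul h.isOpen hr hlap).const_mul _)
          h.isOpen.measurableSet fun z hz => ?_
        · exact (integrable_mul_of_tsupport_subset h.isOpen hlap hη.contDiff.continuous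
            hη.hasCompactSupport hη.tsupport_subset).integrableOn
        · nlinarith [mul_le_mul_of_nonneg_left (hle z hz) (hv.lap_nonneg z hz)]
    _ = 8 * c * (4⁻¹ * ∫ z in Ω, (max (u z) r - u z) * lap v z) := by
        rw [integral_const_mul]
        ring
    _ ≤ 8 * c * N := by
        gcongr
        exact (hM.integral_mul_lap_le v hv r hr).trans (hN r hr)

lemma IsMongeAmpereFamily.exists_integral_mul_ringDensity_le (hM : IsMongeAmpereFamily Ω u μ)
    (hu : IsExhaustion u Ω) (h : IsRiemannMap Ω φ ψ) (hv : IsNonnegSubharmonic v Ω)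
    (hN : ∀ r < 0, ∫ z, v z ∂μ r ≤ N) :
    ∃ C, ∀ a b, 1 / 4 ≤ a → a < b → b < 1 → ∫ z in Ω, v z * ringDensity φ a b z ≤ C := by
  obtain ⟨c, hc, hhopf⟩ := hu.exists_forall_le_neg_mul h
  refine ⟨8 * (8 / c) * N + ∫ z in Ω, v z * ringDensity φ (1 / 8) (1 / 4) z,
    fun a b ha hab hb => ?_⟩
  have hη := isTestFunction_ringPotential h ha hab hb
  have hvcont := hv.contDiffOn.continuousOn
  have hηu (z : ℂ) (hz : z ∈ Ω) : ringPotential Ω φ a b z ≤ -(8 / c) * u z := by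
    refine (ringPotential_le h ha hab hz).trans ?_
    rw [neg_mul, div_mul_eq_mul_div, ← neg_div, le_div_iff₀ hc]
    linarith [hhopf z hz]
  calc ∫ z in Ω, v z * ringDensity φ a b z
      = ∫ z in Ω, (v z * lap (ringPotential Ω φ a b) z +
          v z * ringDensity φ (1 / 8) (1 / 4) z) :=
        setIntegral_congr_fun h.isOpen.measurableSet fun z hz => by
          simp only [lap_ringPotential h ha hab hz]
          ring
    _ = (∫ z in Ω, v z * lap (ringPotential Ω φ a b) z) +
          ∫ z in Ω, v z * ringDensity φ (1 / 8) (1 / 4) z :=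
        integral_add (hη.integrable_mul_lap h.isOpen hvcont).integrableOn
          (integrableOn_mul_ringDensity h (by norm_num) (by norm_num) hvcont)
    _ ≤ 8 * (8 / c) * N + ∫ z in Ω, v z * ringDensity φ (1 / 8) (1 / 4) z := by
        rw [setIntegral_mul_of_tsupport_subset hη.tsupport_lap_subset,
          hη.integral_mul_lap_comm h.isOpen hv.contDiffOn,
          ← setIntegral_mul_of_tsupport_subset hη.tsupport_subset]
        gcongr
        exact hM.integral_lap_mul_le hu h hv hN (by positivity) hη hηu

end RingAverages

section CircleAverages

variable {Ω : Set ℂ} {φ ψ : ℂ → ℂ} {u v V : ℂ → ℝ} {μ : ℝ → Measure ℂ} {a b c N t : ℝ}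

section PolarCoordinates

variable {E : Type*} [NormedAddCommGroup E] [NormedSpace ℝ E] {f : ℂ → E}

lemma integrableOn_smul_comp_polarCoord_symm (hf : Integrable f) :
    IntegrableOn (fun p => p.1 • f (Complex.polarCoord.symm p)) polarCoord.target := by
  have hprod : IntegrableOn (fun p => f (measurableEquivRealProd.symm p))
      (polarCoord.symm '' polarCoord.target) :=
    (volume_preserving_equiv_real_prod.symm.integrable_comp_of_integrable hf).integrableOn
  rw [integrableOn_image_iff_integrableOn_abs_det_fderiv_smul volume
    polarCoord.open_target.measurableSet
    (fun p _ => (hasFDerivAt_polarCoord_symm p).hasFDerivWithinAt) polarCoord.symm.injOn] at hprod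
  refine hprod.congr_fun (fun p hp => ?_) polarCoord.open_target.measurableSet
  simp only [det_fderivPolarCoordSymm, abs_of_pos (mem_Ioi.1 hp.1)]
  rfl

lemma integral_smul_comp_polarCoord_symm_eq_circleAverage :
    ∫ θ in Ioo (-π) π, t • f (Complex.polarCoord.symm (t, θ)) =
      (2 * π * t) • Real.circleAverage f 0 t := by
  have hpolar (θ : ℝ) : Complex.polarCoord.symm (t, θ) = circleMap 0 t θ := by
    simp [circleMap, exp_mul_I]
  have hshift : ∫ θ in (0 : ℝ)..2 * π, f (circleMap 0 t (θ + -π)) =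
      ∫ θ in Ioo (-π) π, f (circleMap 0 t θ) := by
    rw [intervalIntegral.integral_comp_add_right (fun θ => f (circleMap 0 t θ)),
      ← integral_Ioc_eq_integral_Ioo,
      ← intervalIntegral.integral_of_le (by linarith [Real.pi_pos])]
    congr 1 <;> ring
  simp only [hpolar]
  rw [integral_smul, Real.circleAverage_eq_integral_add (-π), hshift, smul_smul, mul_right_comm,
    mul_inv_cancel₀ Real.two_pi_pos.ne', one_mul]

lemma integrableOn_smul_circleAverage (hf : Integrable f) :
    IntegrableOn (fun t => (2 * π * t) • Real.circleAverage f 0 t) (Ioi 0) := by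
  have hpolar := integrableOn_smul_comp_polarCoord_symm hf
  rw [polarCoord_target, IntegrableOn, Measure.volume_eq_prod, ← Measure.prod_restrict] at hpolar
  simpa only [integral_smul_comp_polarCoord_symm_eq_circleAverage, IntegrableOn]
    using hpolar.integral_prod_left

lemma integral_eq_setIntegral_smul_circleAverage (hf : Integrable f) :
    ∫ z, f z = ∫ t in Ioi 0, (2 * π * t) • Real.circleAverage f 0 t := by
  have hpolar := integrableOn_smul_comp_polarCoord_symm hf
  rw [polarCoord_target, Measure.volume_eq_prod] at hpolar
  rw [← Complex.integral_comp_polarCoord_symm, polarCoord_target, Measure.volume_eq_prod,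
    setIntegral_prod _ hpolar]
  simp only [integral_smul_comp_polarCoord_symm_eq_circleAverage]

end PolarCoordinates

lemma isRiemannMap_id : IsRiemannMap (ball 0 1) id id where
  isOpen := isOpen_ball
  differentiableOn := differentiableOn_id
  mapsTo := mapsTo_id _
  differentiableOn_symm := differentiableOn_id
  mapsTo_symm := mapsTo_id _
  invOn := ⟨fun _ _ => rfl, fun _ _ => rfl⟩

lemma setIntegral_mul_ringDensity (h : IsRiemannMap Ω φ ψ) :
    ∫ z in Ω, v z * ringDensity φ a b z = ∫ z in ball 0 1, v (ψ z) * ringDensity id a b z := by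
  have hbij : BijOn ψ (ball 0 1) Ω := h.invOn.symm.bijOn h.mapsTo_symm h.mapsTo
  have hderiv (z : ℂ) (hz : z ∈ ball (0 : ℂ) 1) : HasFDerivWithinAt ψ
      ((ContinuousLinearMap.toSpanSingleton ℂ (deriv ψ z)).restrictScalars ℝ) (ball 0 1) z :=
    ((h.differentiableOn_symm.differentiableAt
      (isOpen_ball.mem_nhds hz)).hasDerivAt.hasFDerivAt.restrictScalars ℝ).hasFDerivWithinAt
  rw [← hbij.image_eq, integral_image_eq_integral_abs_det_fderiv_smul volume measurableSet_ball
    hderiv hbij.injOn]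
  refine setIntegral_congr_fun measurableSet_ball fun z hz => ?_
  have hdet : ((ContinuousLinearMap.toSpanSingleton ℂ (deriv ψ z)).restrictScalars ℝ).det =
      ‖deriv ψ z‖ ^ 2 := by
    simp [ContinuousLinearMap.det, LinearMap.det_restrictScalars, Algebra.norm_complex_eq,
      Complex.normSq_eq_norm_sq]
  have hnorm : ‖deriv φ (ψ z)‖ * ‖deriv ψ z‖ = 1 := by
    rw [← norm_mul, h.deriv_mul_deriv hz, norm_one]
  have hφψ : φ (ψ z) = z := h.invOn.2 hz
  simp only [hdet, smul_eq_mul, ringDensity, deriv_id', id, norm_one, hφψ, abs_sq]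
  linear_combination v (ψ z) * 4 * deriv (smoothStep a b) (‖z‖ ^ 2) *
    (‖deriv φ (ψ z)‖ * ‖deriv ψ z‖ + 1) * hnorm

lemma integral_deriv_smoothStep_sq_mul (ha : 0 ≤ a) (hab : a < b) :
    IntegrableOn (fun t => deriv (smoothStep a b) (t ^ 2) * (2 * t)) (Ioi 0) ∧
    ∫ t in Ioi 0, deriv (smoothStep a b) (t ^ 2) * (2 * t) = 1 := by
  have hderiv (t : ℝ) : HasDerivAt (fun t => smoothStep a b (t ^ 2))
      (deriv (smoothStep a b) (t ^ 2) * (2 * t)) t := by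
    simpa [Function.comp_def] using
      (contDiff_smoothStep.differentiable (n := 1) one_ne_zero (t ^ 2)).hasDerivAt.comp t
        (hasDerivAt_pow 2 t)
  have hnonneg (t : ℝ) (ht : t ∈ Ioi (0 : ℝ)) : 0 ≤ deriv (smoothStep a b) (t ^ 2) * (2 * t) :=
    mul_nonneg (deriv_smoothStep_nonneg hab) (by linarith [mem_Ioi.1 ht])
  have hlim : Tendsto (fun t => smoothStep a b (t ^ 2)) atTop (𝓝 1) :=
    tendsto_const_nhds.congr' <| by
      filter_upwards [(tendsto_pow_atTop two_ne_zero).eventually_ge_atTop b] with t ht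
      exact (smoothStep_of_ge hab ht).symm
  have hcont := (hderiv 0).continuousAt.continuousWithinAt (s := Ici 0)
  refine ⟨integrableOn_Ioi_deriv_of_nonneg hcont (fun t _ => hderiv t) hnonneg hlim, ?_⟩
  rw [integral_Ioi_of_hasDerivAt_of_nonneg hcont (fun t _ => hderiv t) hnonneg hlim,
    smoothStep_of_le hab (by simpa using ha), sub_zero]

lemma le_setIntegral_ball_mul_ringDensity (hV : ContinuousOn V (ball 0 1)) (ha : 0 ≤ a)
    (hab : a < b) (hb : b < 1)
    (hc : ∀ t, 0 < t → t < 1 → a < t ^ 2 → c ≤ Real.circleAverage V 0 t) :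
    4 * π * c ≤ ∫ z in ball 0 1, V z * ringDensity id a b z := by
  set f : ℂ → ℝ := (ball 0 1).indicator fun z => V z * ringDensity id a b z with hf
  have hf_int : Integrable f := (integrable_indicator_iff measurableSet_ball).2
    (integrableOn_mul_ringDensity isRiemannMap_id hab hb hV)
  have hf_avg (t : ℝ) (ht : t < 1) (ht0 : 0 < t) : Real.circleAverage f 0 t =
      4 * deriv (smoothStep a b) (t ^ 2) * Real.circleAverage V 0 t := by
    rw [← smul_eq_mul, ← Real.circleAverage_fun_smul]
    refine Real.circleAverage_congr_sphere fun z hz => ?_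
    have hz' : ‖z‖ = t := by simpa [abs_of_pos ht0] using hz
    have hz1 : z ∈ ball (0 : ℂ) 1 := by simpa [hz'] using ht
    simp only [hf, indicator_of_mem hz1, ringDensity, deriv_id', id, norm_one, hz', smul_eq_mul]
    ring
  obtain ⟨hk_int, hk⟩ := integral_deriv_smoothStep_sq_mul ha hab
  rw [← integral_indicator measurableSet_ball, integral_eq_setIntegral_smul_circleAverage hf_int,
    ← mul_one (4 * π * c), ← hk, ← integral_const_mul]
  refine setIntegral_mono_on (hk_int.const_mul _) (integrableOn_smul_circleAverage hf_int)
    measurableSet_Ioi fun t ht => ?_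
  have ht0 : 0 < t := ht
  rcases lt_or_ge t 1 with ht1 | ht1
  · rw [hf_avg t ht1 ht0]
    rcases le_or_gt (t ^ 2) a with hta | hta
    · simp [deriv_smoothStep_of_le hab hta]
    · calc 4 * π * c * (deriv (smoothStep a b) (t ^ 2) * (2 * t))
          = 8 * π * t * deriv (smoothStep a b) (t ^ 2) * c := by ring
        _ ≤ 8 * π * t * deriv (smoothStep a b) (t ^ 2) * Real.circleAverage V 0 t :=
          mul_le_mul_of_nonneg_left (hc t ht0 ht1 hta)
            (mul_nonneg (by positivity) (deriv_smoothStep_nonneg hab))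
        _ = (2 * π * t) •
            (4 * deriv (smoothStep a b) (t ^ 2) * Real.circleAverage V 0 t) := by
          rw [smul_eq_mul]
          ring
  · have hzero : Real.circleAverage f 0 t = 0 := by
      rw [← Real.circleAverage_const (0 : ℝ) 0 t]
      refine Real.circleAverage_congr_sphere fun z hz => indicator_of_notMem ?_ _
      simpa [abs_of_pos ht0, mem_sphere_zero_iff_norm.1 hz] using ht1
    rw [hzero, deriv_smoothStep_of_ge hab (hb.le.trans (one_le_pow₀ ht1))]
    simp

lemma IsMongeAmpereFamily.exists_frequently_circleAverage_le (hM : IsMongeAmpereFamily Ω u μ)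
    (hu : IsExhaustion u Ω) (h : IsRiemannMap Ω φ ψ) (hv : IsNonnegSubharmonic v Ω)
    (hN : ∀ r < 0, ∫ z, v z ∂μ r ≤ N) :
    ∃ C, ∃ᶠ t in 𝓝[<] (1 : ℝ), Real.circleAverage (v ∘ ψ) 0 t ≤ C := by
  obtain ⟨C, hC⟩ := hM.exists_integral_mul_ringDensity_le hu h hv hN
  refine ⟨C / (4 * π) + 1, fun hlt => ?_⟩
  obtain ⟨s, hs, hlt⟩ := (mem_nhdsLT_iff_exists_Ioo_subset' (zero_lt_one' ℝ)).1 hlt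
  set m := max s (1 / 2)
  have hm2 : 1 / 2 ≤ m := le_max_right _ _
  have hm1 : m < 1 := max_lt hs (by norm_num)
  have hlarge (t : ℝ) (ht0 : 0 < t) (ht1 : t < 1) (hmt : m ^ 2 < t ^ 2) :
      C / (4 * π) + 1 ≤ Real.circleAverage (v ∘ ψ) 0 t :=
    (not_le.1 (hlt ⟨(le_max_left s _).trans_lt (lt_of_pow_lt_pow_left₀ 2 ht0.le hmt), ht1⟩)).le
  have hm_sq : m ^ 2 < 1 := pow_lt_one₀ (by linarith) hm1 two_ne_zero
  have hupper := hC (m ^ 2) ((m ^ 2 + 1) / 2) (by nlinarith) (by linarith) (by linarith)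
  have hlower := le_setIntegral_ball_mul_ringDensity
    (hv.contDiffOn.continuousOn.comp h.continuousOn_symm h.mapsTo_symm) (sq_nonneg m)
    (by linarith : m ^ 2 < (m ^ 2 + 1) / 2) (by linarith) hlarge
  have hval : 4 * π * (C / (4 * π) + 1) = C + 4 * π := by field_simp
  rw [setIntegral_mul_ringDensity h] at hupper
  simp only [Function.comp_apply] at hlower
  linarith [Real.pi_pos]

end CircleAverages

/-! ### Harmonic majorants -/

section HerglotzMajorants

section Montel

variable {ι E : Type*} [NormedAddCommGroup E] [NormedSpace ℂ E] {U : Set ℂ} {K : ι → ℂ → E} {x : ℂ}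

lemma equicontinuousAt_of_eventually_norm_le {B : ℝ}
    (hK : ∀ᶠ y in 𝓝 x, ∀ i, DifferentiableAt ℂ (K i) y)
    (hB : ∀ᶠ y in 𝓝 x, ∀ i, ‖K i y‖ ≤ B) : EquicontinuousAt K x := by
  obtain ⟨d, hd, hball⟩ := Metric.eventually_nhds_iff_ball.1 (hK.and hB)
  refine Metric.equicontinuousAt_of_continuity_modulus (fun y => 2 * B / d * dist y x) ?_ K ?_
  · have : Continuous fun y => 2 * B / d * dist y x := by fun_prop
    simpa using this.tendsto x
  filter_upwards [ball_mem_nhds x hd] with y hy i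
  rw [dist_comm]
  refine Complex.dist_le_div_mul_dist_of_mapsTo_ball
    (fun z hz => ((hball z hz).1 i).differentiableWithinAt) (fun z hz => ?_) hy
  rw [mem_closedBall, dist_eq_norm]
  linarith [norm_sub_le (K i z) (K i x), (hball z hz).2 i, (hball x (mem_ball_self hd)).2 i]

lemma tendstoLocallyUniformlyOn_of_equicontinuousAt {X Y : Type*} [TopologicalSpace X]
    [LocallyCompactSpace X] [UniformSpace Y] {F : ι → X → Y} {f : X → Y} {l : Filter ι}
    {s : Set X} (hs : IsOpen s) (hF : ∀ x ∈ s, EquicontinuousAt F x)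
    (hlim : ∀ x ∈ s, Tendsto (F · x) l (𝓝 (f x))) : TendstoLocallyUniformlyOn F f l s := by
  rw [tendstoLocallyUniformlyOn_iff_forall_isCompact hs]
  intro k hks hk
  have hFk : EquicontinuousOn F k := fun x hx => (hF x (hks hx)).equicontinuousWithinAt k
  refine UniformOnFun.tendsto_iff_tendstoUniformlyOn.1
    ((EquicontinuousOn.tendsto_uniformOnFun_iff_pi' (𝔖 := {k}) (by simpa) (by simpa) l f).2 ?_)
    k rfl
  refine tendsto_pi_nhds.2 fun x => hlim x (hks ?_)
  simpa using x.2

lemma exists_differentiableOn_tendsto_ultrafilter [ProperSpace E] (l : Ultrafilter ι)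
    (hU : IsOpen U) (hK : ∀ i, DifferentiableOn ℂ (K i) U)
    (hB : ∀ x ∈ U, ∃ B, ∀ᶠ y in 𝓝 x, ∀ i, ‖K i y‖ ≤ B) :
    ∃ H, DifferentiableOn ℂ H U ∧ ∀ x ∈ U, Tendsto (K · x) l (𝓝 (H x)) := by
  have hlim (x : ℂ) (hx : x ∈ U) : ∃ w, Tendsto (K · x) l (𝓝 w) := by
    obtain ⟨B, hB⟩ := hB x hx
    obtain ⟨w, -, hw⟩ := (isCompact_closedBall (0 : E) B).ultrafilter_le_nhds (l.map (K · x))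
      (le_principal_iff.2 <| Filter.mem_map.2 <| Eventually.of_forall fun i => by
        simpa using hB.self_of_nhds i)
    exact ⟨w, hw⟩
  choose! H hH using hlim
  refine ⟨H, TendstoLocallyUniformlyOn.differentiableOn (φ := (l : Filter ι)) ?_
    (Eventually.of_forall hK) hU, hH⟩
  refine tendstoLocallyUniformlyOn_of_equicontinuousAt hU (fun x hx => ?_) hH
  obtain ⟨B, hB⟩ := hB x hx
  refine equicontinuousAt_of_eventually_norm_le ?_ hB
  filter_upwards [hU.mem_nhds hx] with y hy i
  exact (hK i).differentiableAt (hU.mem_nhds hy)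

end Montel

lemma norm_circleAverage_le {E : Type*} [NormedAddCommGroup E] [NormedSpace ℝ E] {f : ℂ → E}
    {c : ℂ} {R : ℝ} : ‖Real.circleAverage f c R‖ ≤ Real.circleAverage (fun z => ‖f z‖) c R := by
  rw [Real.circleAverage_def, Real.circleAverage_def, norm_smul, smul_eq_mul,
    Real.norm_of_nonneg (by positivity)]
  gcongr
  exact intervalIntegral.norm_integral_le_integral_norm Real.two_pi_pos.le

lemma norm_herglotzRieszKernel_le {c w ζ : ℂ} {R : ℝ} (hζ : ζ ∈ sphere c R) (hw : w ∈ ball c R) :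
    ‖herglotzRieszKernel c w ζ‖ ≤ (R + ‖w - c‖) / (R - ‖w - c‖) := by
  have hw' : ‖w - c‖ < R := mem_ball_iff_norm.1 hw
  have hζ' : ‖ζ - c‖ = R := mem_sphere_iff_norm.1 hζ
  rw [herglotzRieszKernel_def, norm_div]
  refine div_le_div₀ (by linarith [norm_nonneg (w - c)]) ?_ (sub_pos.2 hw') ?_
  · exact hζ' ▸ norm_add_le _ _
  · exact hζ' ▸ norm_sub_norm_le _ _

variable {E : Type*} [NormedAddCommGroup E] [NormedSpace ℂ E] {c w : ℂ} {R : ℝ}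

lemma norm_circleAverage_herglotzRieszKernel_smul_le {g : ℂ → E}
    (hg : CircleIntegrable g c R) (hw : w ∈ ball c R) :
    ‖Real.circleAverage (fun ζ => herglotzRieszKernel c w ζ • g ζ) c R‖ ≤
      (R + ‖w - c‖) / (R - ‖w - c‖) * Real.circleAverage (fun ζ => ‖g ζ‖) c R := by
  have hR : 0 < R := (norm_nonneg _).trans_lt (mem_ball_iff_norm.1 hw)
  refine norm_circleAverage_le.trans ?_
  rw [← smul_eq_mul, ← Real.circleAverage_fun_smul]
  refine Real.circleAverage_mono ?_ (hg.norm.const_mul _) fun ζ hζ => ?_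
  · exact (hg.continuousOn_smul (continuousOn_herglotzRieszKernel_sphere hw)).norm
  · rw [norm_smul]
    exact mul_le_mul_of_nonneg_right
      (norm_herglotzRieszKernel_le (by rwa [abs_of_pos hR] at hζ) hw) (norm_nonneg _)

lemma norm_le_re_circleAverage_herglotzRieszKernel_smul_norm [CompleteSpace E] {f : ℂ → E}
    (hf : DiffContOnCl ℂ f (ball 0 R)) (hw : w ∈ ball 0 R) :
    ‖f w‖ ≤ (Real.circleAverage (fun ζ => herglotzRieszKernel 0 w ζ • (‖f ζ‖ : ℂ)) 0 R).re := by
  have hR : 0 < R := (norm_nonneg _).trans_lt (mem_ball_zero_iff.1 hw)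
  have hf_norm : CircleIntegrable (fun ζ => ‖f ζ‖) 0 R := by
    refine (hf.continuousOn_ball.norm.mono ?_).circleIntegrable hR.le
    exact sphere_subset_closedBall
  rw [re_circleAverage_herglotzRieszKernel_smul hf_norm hw,
    ← hf.circleAverage_re_herglotzRieszKernel_smul hw]
  refine norm_circleAverage_le.trans_eq (Real.circleAverage_congr_sphere fun ζ hζ => ?_)
  have hpos : 0 ≤ (herglotzRieszKernel 0 w ζ).re := by
    rw [← Function.comp_apply (f := re), ← poissonKernel_eq_re_herglotzRieszKernel,
      poissonKernel_def, mem_sphere_iff_norm.1 (by rwa [abs_of_pos hR] at hζ)]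
    exact div_nonneg (sub_nonneg.2 (pow_le_pow_left₀ (norm_nonneg _)
      (mem_ball_iff_norm.1 hw).le 2)) (sq_nonneg _)
  simp [norm_smul, abs_of_nonneg hpos]

lemma exists_norm_comp_mul_le_re [CompleteSpace E] {F : ℂ → E} {C t : ℝ}
    (hF : DifferentiableOn ℂ F (ball 0 1)) (ht0 : 0 < t) (ht1 : t < 1)
    (hC : Real.circleAverage (fun z => ‖F z‖) 0 t ≤ C) :
    ∃ K : ℂ → ℂ, DifferentiableOn ℂ K (ball 0 1) ∧
      (∀ w ∈ ball (0 : ℂ) 1, ‖K w‖ ≤ (1 + ‖w‖) / (1 - ‖w‖) * C) ∧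
      ∀ w ∈ ball (0 : ℂ) 1, ‖F (t * w)‖ ≤ (K w).re := by
  have hF_dil : DiffContOnCl ℂ (fun z => F (t * z)) (ball 0 1) := by
    refine (hF.comp (by fun_prop) fun z hz => ?_).diffContOnCl
    rw [closure_ball _ one_ne_zero, mem_closedBall_zero_iff] at hz
    rw [mem_ball_zero_iff, norm_mul, norm_real, Real.norm_of_nonneg ht0.le]
    exact mul_lt_one_of_nonneg_of_lt_one_left ht0.le ht1 hz
  have hg : CircleIntegrable (fun ζ => (‖F (t * ζ)‖ : ℂ)) 0 1 := by
    refine (continuous_ofReal.comp_continuousOn ?_).circleIntegrable zero_le_one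
    exact hF_dil.continuousOn_ball.norm.mono sphere_subset_closedBall
  refine ⟨fun w => Real.circleAverage (fun ζ => herglotzRieszKernel 0 w ζ • (‖F (t * ζ)‖ : ℂ)) 0 1,
    differentiableOn_circleAverage_herglotzRieszKernel_smul hg, fun w hw => ?_,
    fun w hw => ?_⟩
  swap
  · exact norm_le_re_circleAverage_herglotzRieszKernel_smul_norm
      (f := fun z => F (t * z)) hF_dil hw
  have hw' : ‖w‖ < 1 := mem_ball_zero_iff.1 hw
  have havg : Real.circleAverage (fun ζ => ‖(‖F (t * ζ)‖ : ℂ)‖) 0 1 ≤ C := by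
    simpa [Real.circleAverage_eq_circleAverage_zero_one (R := t)] using hC
  have hbound := norm_circleAverage_herglotzRieszKernel_smul_le hg hw
  rw [sub_zero] at hbound
  exact hbound.trans (mul_le_mul_of_nonneg_left havg (div_nonneg (by positivity) (by linarith)))

lemma exists_norm_le_re_of_frequently_circleAverage_le [CompleteSpace E] {F : ℂ → E} {C : ℝ}
    (hF : DifferentiableOn ℂ F (ball 0 1))
    (hC : ∃ᶠ t in 𝓝[<] (1 : ℝ), Real.circleAverage (fun z => ‖F z‖) 0 t ≤ C) :
    ∃ H : ℂ → ℂ, DifferentiableOn ℂ H (ball 0 1) ∧ ∀ z ∈ ball (0 : ℂ) 1, ‖F z‖ ≤ (H z).re := by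
  obtain ⟨t, ht_lim, ht⟩ := exists_seq_forall_of_frequently
    (hC.and_eventually (Ioo_mem_nhdsLT zero_lt_one))
  choose K hK hK_bound hFK using
    fun n => exists_norm_comp_mul_le_re hF (ht n).2.1 (ht n).2.2 (ht n).1
  have hK_locally_bounded (x : ℂ) (hx : x ∈ ball (0 : ℂ) 1) :
      ∃ B, ∀ᶠ y in 𝓝 x, ∀ n, ‖K n y‖ ≤ B := by
    refine ⟨(1 + ‖x‖) / (1 - ‖x‖) * C + 1, ?_⟩
    have hcont : ContinuousAt (fun w : ℂ => (1 + ‖w‖) / (1 - ‖w‖) * C) x := by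
      have : 1 - ‖x‖ ≠ 0 := (sub_pos.2 (mem_ball_zero_iff.1 hx)).ne'
      fun_prop (disch := assumption)
    filter_upwards [hcont.eventually_lt_const (lt_add_one _), isOpen_ball.mem_nhds hx]
      with y hy hy1 n
    exact (hK_bound n y hy1).trans hy.le
  obtain ⟨H, hH, hKH⟩ := exists_differentiableOn_tendsto_ultrafilter (hyperfilter ℕ) isOpen_ball
    hK hK_locally_bounded
  refine ⟨H, hH, fun z hz => ?_⟩
  have hFz : Tendsto (fun n => ‖F (t n * z)‖) (hyperfilter ℕ) (𝓝 ‖F z‖) := by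
    have hcont : ContinuousAt F z := hF.continuousOn.continuousAt (isOpen_ball.mem_nhds hz)
    have htz : Tendsto (fun n => (t n : ℂ) * z) atTop (𝓝 z) := by
      simpa using ((continuous_ofReal.tendsto 1).comp
        (tendsto_nhds_of_tendsto_nhdsWithin ht_lim)).mul_const z
    exact (hcont.tendsto.comp (htz.mono_left Nat.hyperfilter_le_atTop)).norm
  exact le_of_tendsto_of_tendsto' hFz ((continuous_re.tendsto _).comp (hKH z hz))
    fun n => hFK n z hz

end HerglotzMajorants

section HarmonicMajorant

lemma le_sqrt_sq_add_one (x : ℝ) : x ≤ √(x ^ 2 + 1) :=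
  Real.le_sqrt_of_sq_le (by linarith)

lemma sqrt_sq_add_one_le {x p : ℝ} (hx : 0 ≤ x) (hp : 1 ≤ p) : √(x ^ 2 + 1) ≤ 2 + x ^ p := by
  have hsqrt : √(x ^ 2 + 1) ≤ 1 + x := Real.sqrt_le_iff.2 ⟨by positivity, by nlinarith⟩
  have hpow : x ≤ 1 + x ^ p := by
    rcases le_total x 1 with h | h
    · linarith [Real.rpow_nonneg hx p]
    · linarith [Real.self_le_rpow_of_one_le h hp]
  linarith

variable {Ω : Set ℂ} {u : ℂ → ℝ} {μ : ℝ → Measure ℂ} {φ ψ f : ℂ → ℂ} {p N : ℝ}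

lemma IsMongeAmpereFamily.exists_integral_sqrt_norm_sq_add_one_le
    (hM : IsMongeAmpereFamily Ω u μ) (hu : IsExhaustion u Ω) (hf : ContinuousOn f Ω) (hp : 1 ≤ p)
    (hN : ∀ r < 0, ∫ z, ‖f z‖ ^ p ∂μ r ≤ N) :
    ∃ N', ∀ r < 0, ∫ z, √(‖f z‖ ^ 2 + 1) ∂μ r ≤ N' := by
  obtain ⟨T, hT⟩ := hM.exists_measure_univ_le
  refine ⟨T * 2 + N, fun r hr => ?_⟩
  have hmass : (μ r).real univ ≤ T := ENNReal.toReal_mono ENNReal.coe_ne_top (hT r hr)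
  have : IsFiniteMeasure (μ r) := ⟨(hT r hr).trans_lt ENNReal.coe_lt_top⟩
  have hfp : Integrable (fun z => ‖f z‖ ^ p) (μ r) :=
    hM.integrable hu (hf.norm.rpow_const fun _ _ => .inr (zero_le_one.trans hp)) hr
  calc ∫ z, √(‖f z‖ ^ 2 + 1) ∂μ r ≤ ∫ z, (2 + ‖f z‖ ^ p) ∂μ r :=
        MeasureTheory.integral_mono
          (hM.integrable hu ((hf.norm.pow 2).add continuousOn_const).sqrt hr)
          ((integrable_const 2).add hfp) fun z => sqrt_sq_add_one_le (norm_nonneg _) hp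
    _ = (μ r).real univ * 2 + ∫ z, ‖f z‖ ^ p ∂μ r := by
        rw [integral_add (integrable_const 2) hfp, integral_const, smul_eq_mul]
    _ ≤ T * 2 + N := by gcongr; exact hN r hr

lemma IsMongeAmpereFamily.exists_norm_le_re (hM : IsMongeAmpereFamily Ω u μ)
    (hu : IsExhaustion u Ω) (h : IsRiemannMap Ω φ ψ) (hf : DifferentiableOn ℂ f Ω) (hp : 1 ≤ p)
    (hN : ∀ r < 0, ∫ z, ‖f z‖ ^ p ∂μ r ≤ N) :
    ∃ H : ℂ → ℂ, DifferentiableOn ℂ H Ω ∧ ∀ z ∈ Ω, ‖f z‖ ≤ (H z).re := by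
  obtain ⟨N', hN'⟩ := hM.exists_integral_sqrt_norm_sq_add_one_le hu hf.continuousOn hp hN
  have hv : IsNonnegSubharmonic (fun z => √(‖f z‖ ^ 2 + 1)) Ω := by
    simpa only [Real.sqrt_eq_rpow] using
      isNonnegSubharmonic_norm_sq_add_rpow h.isOpen hf one_half_pos one_pos
  obtain ⟨C, hC⟩ := hM.exists_frequently_circleAverage_le hu h hv hN'
  have hfψ : DifferentiableOn ℂ (f ∘ ψ) (ball 0 1) := hf.comp h.differentiableOn_symm h.mapsTo_symm
  obtain ⟨H, hH, hfH⟩ := exists_norm_le_re_of_frequently_circleAverage_le hfψ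
    (C := C) <| (hC.and_eventually (Ioo_mem_nhdsLT zero_lt_one)).mono fun t ⟨ht, ht0, ht1⟩ => by
      have hsphere : sphere (0 : ℂ) |t| ⊆ ball 0 1 := by
        rw [abs_of_pos ht0]
        exact sphere_subset_ball ht1
      have hcont := hfψ.continuousOn.norm.mono hsphere
      exact (Real.circleAverage_mono hcont.circleIntegrable'
        (hcont.pow 2 |>.add continuousOn_const).sqrt.circleIntegrable'
        fun z _ => le_sqrt_sq_add_one _).trans ht
  refine ⟨H ∘ φ, hH.comp h.differentiableOn h.mapsTo, fun z hz => ?_⟩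
  simpa [h.invOn.1 hz] using hfH (φ z) (h.mapsTo hz)

end HarmonicMajorant

section Damping

/-- The factor `s / (s + w)`. If `w` has nonnegative real part it lies in the unit disc, multiplying
by it makes every `z` with `‖z‖ ≤ re w` bounded by `s`, and it tends to `1` as `s → ∞`. -/
def dampingFactor (s : ℝ) (w : ℂ) : ℂ := s / (s + w)

variable {s p : ℝ} {w z : ℂ}

lemma add_ne_zero_of_re_nonneg (hs : 0 < s) (hw : 0 ≤ w.re) : (s : ℂ) + w ≠ 0 := by
  have hre : 0 < ((s : ℂ) + w).re := by simpa using by linarith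
  exact fun h => hre.ne' (by simp [h])

lemma one_sub_dampingFactor (hs : 0 < s) (hw : 0 ≤ w.re) : 1 - dampingFactor s w = w / (s + w) := by
  rw [dampingFactor, one_sub_div (add_ne_zero_of_re_nonneg hs hw), add_sub_cancel_left]

lemma norm_sq_one_sub_dampingFactor_add_le (hs : 0 < s) (hw : 0 ≤ w.re) :
    ‖1 - dampingFactor s w‖ ^ 2 + ‖dampingFactor s w‖ ^ 2 ≤ 1 := by
  have hnorm : ‖w‖ ^ 2 + s ^ 2 ≤ ‖(s : ℂ) + w‖ ^ 2 := by
    simp only [← normSq_eq_norm_sq, normSq_apply, add_re, add_im, ofReal_re, ofReal_im]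
    nlinarith
  have hpos : 0 < ‖(s : ℂ) + w‖ := norm_pos_iff.2 (add_ne_zero_of_re_nonneg hs hw)
  rw [one_sub_dampingFactor hs hw, dampingFactor, norm_div, norm_div, norm_real, div_pow, div_pow,
    ← add_div, Real.norm_eq_abs, sq_abs]
  exact (div_le_one (by positivity)).2 hnorm

lemma norm_dampingFactor_le_one (hs : 0 < s) (hw : 0 ≤ w.re) : ‖dampingFactor s w‖ ≤ 1 :=
  (sq_le_one_iff₀ (norm_nonneg _)).1
    ((le_add_of_nonneg_left (sq_nonneg _)).trans (norm_sq_one_sub_dampingFactor_add_le hs hw))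

lemma norm_one_sub_dampingFactor_le_one (hs : 0 < s) (hw : 0 ≤ w.re) :
    ‖1 - dampingFactor s w‖ ≤ 1 :=
  (sq_le_one_iff₀ (norm_nonneg _)).1
    ((le_add_of_nonneg_right (sq_nonneg _)).trans (norm_sq_one_sub_dampingFactor_add_le hs hw))

lemma norm_sq_one_sub_dampingFactor_le (hp : 1 ≤ p) (hs : 0 < s) (hw : 0 ≤ w.re) :
    ‖1 - dampingFactor s w‖ ^ 2 ≤ 2 * (1 - ‖dampingFactor s w‖ ^ p) := by
  have hle := norm_dampingFactor_le_one hs hw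
  have hpow : ‖dampingFactor s w‖ ^ p ≤ ‖dampingFactor s w‖ :=
    Real.rpow_le_self_of_le_one (norm_nonneg _) hle hp
  nlinarith [norm_sq_one_sub_dampingFactor_add_le hs hw, norm_nonneg (dampingFactor s w)]

lemma norm_mul_dampingFactor_le (hs : 0 < s) (hz : ‖z‖ ≤ w.re) : ‖z * dampingFactor s w‖ ≤ s := by
  have hw : 0 ≤ w.re := (norm_nonneg z).trans hz
  have hle : ‖z‖ ≤ ‖(s : ℂ) + w‖ := by
    refine le_trans ?_ (re_le_norm _)
    simpa using by linarith
  rw [dampingFactor, norm_mul, norm_div, norm_real, Real.norm_of_nonneg hs.le, ← mul_div_assoc,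
    div_le_iff₀ (norm_pos_iff.2 (add_ne_zero_of_re_nonneg hs hw)), mul_comm]
  gcongr

lemma tendsto_dampingFactor_atTop (w : ℂ) : Tendsto (fun s => dampingFactor s w) atTop (𝓝 1) := by
  have hinv : Tendsto (fun s : ℝ => ((s⁻¹ : ℝ) : ℂ)) atTop (𝓝 0) :=
    (continuous_ofReal.tendsto' 0 0 ofReal_zero).comp tendsto_inv_atTop_zero
  have hlim : Tendsto (fun s : ℝ => (1 + ((s⁻¹ : ℝ) : ℂ) * w)⁻¹) atTop (𝓝 1) := by
    simpa using ((hinv.mul_const w).const_add 1).inv₀ (by simp)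
  refine hlim.congr' ?_
  filter_upwards [eventually_gt_atTop 0] with s hs
  have : (s : ℂ) ≠ 0 := ofReal_ne_zero.2 hs.ne'
  rw [dampingFactor, ofReal_inv, ← mul_div_mul_left _ _ (inv_ne_zero this), mul_add,
    inv_mul_cancel₀ this, one_div]

end Damping

/-! ### Approximation by bounded functions -/

section BoundedApproximation

lemma exists_forall_rpow_le_add_mul_sq {p B a : ℝ} (hp : 0 < p) (ha : 0 < a) :
    ∃ K, 0 ≤ K ∧ ∀ y, 0 ≤ y → y ≤ B → y ^ p ≤ a + K * y ^ 2 := by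
  set t := a ^ p⁻¹
  have : 0 < t := Real.rpow_pos_of_pos ha _
  refine ⟨|B| ^ p / t ^ 2, by positivity, fun y hy hyB => ?_⟩
  rcases le_total y t with h | h
  · calc y ^ p ≤ t ^ p := by gcongr
      _ = a := Real.rpow_inv_rpow ha.le hp.ne'
      _ ≤ a + |B| ^ p / t ^ 2 * y ^ 2 := le_add_of_nonneg_right (by positivity)
  · calc y ^ p ≤ |B| ^ p * 1 := by rw [mul_one]; gcongr; exact hyB.trans (le_abs_self B)
      _ ≤ |B| ^ p * (y ^ 2 / t ^ 2) := by
        gcongr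
        exact (one_le_div (by positivity)).2 (by gcongr)
      _ = |B| ^ p / t ^ 2 * y ^ 2 := by ring
      _ ≤ a + |B| ^ p / t ^ 2 * y ^ 2 := le_add_of_nonneg_left ha.le

lemma exists_forall_le_add_of_bddAbove {ι : Type*} [Nonempty ι] {I : ι → ℝ}
    (hI : BddAbove (range I)) {δ : ℝ} (hδ : 0 < δ) : ∃ i, ∀ j, I j ≤ I i + δ := by
  obtain ⟨i, hi⟩ := exists_lt_of_lt_ciSup (sub_lt_self (⨆ i, I i) hδ)
  exact ⟨i, fun j => by linarith [le_ciSup hI j]⟩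

lemma norm_sub_mul_dampingFactor_rpow_le {p a K s : ℝ} {w z : ℂ} (hp : 1 ≤ p) (hs : 0 < s)
    (hw : 0 ≤ w.re) (hK0 : 0 ≤ K) (hK : ∀ y, 0 ≤ y → y ≤ 1 → y ^ p ≤ a + K * y ^ 2) :
    ‖z - z * dampingFactor s w‖ ^ p ≤
      a * ‖z‖ ^ p + 2 * K * (‖z‖ ^ p - ‖z * dampingFactor s w‖ ^ p) :=
  calc ‖z - z * dampingFactor s w‖ ^ p = ‖z‖ ^ p * ‖1 - dampingFactor s w‖ ^ p := by
        rw [← mul_one_sub, norm_mul, Real.mul_rpow (norm_nonneg _) (norm_nonneg _)]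
    _ ≤ ‖z‖ ^ p * (a + K * (2 * (1 - ‖dampingFactor s w‖ ^ p))) := by
        gcongr
        refine (hK _ (norm_nonneg _) (norm_one_sub_dampingFactor_le_one hs hw)).trans ?_
        gcongr
        exact norm_sq_one_sub_dampingFactor_le hp hs hw
    _ = a * ‖z‖ ^ p + 2 * K * (‖z‖ ^ p - ‖z * dampingFactor s w‖ ^ p) := by
        rw [norm_mul, Real.mul_rpow (norm_nonneg _) (norm_nonneg _)]
        ring

variable {Ω : Set ℂ} {u : ℂ → ℝ} {μ : ℝ → Measure ℂ} {f H : ℂ → ℂ} {p N r s : ℝ}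

lemma differentiableOn_mul_dampingFactor (hf : DifferentiableOn ℂ f Ω)
    (hH : DifferentiableOn ℂ H Ω) (hre : ∀ z ∈ Ω, 0 ≤ (H z).re) (hs : 0 < s) :
    DifferentiableOn ℂ (fun z => f z * dampingFactor s (H z)) Ω :=
  hf.mul ((differentiableOn_const _).div (hH.const_add _)
    fun z hz => add_ne_zero_of_re_nonneg hs (hre z hz))

namespace IsMongeAmpereFamily

lemma integrable_norm_rpow (hM : IsMongeAmpereFamily Ω u μ) (hu : IsExhaustion u Ω)
    (hf : ContinuousOn f Ω) (hp : 0 ≤ p) (hr : r < 0) : Integrable (fun z => ‖f z‖ ^ p) (μ r) :=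
  hM.integrable hu (hf.norm.rpow_const fun _ _ => .inr hp) hr

lemma tendsto_integral_mul_dampingFactor (hM : IsMongeAmpereFamily Ω u μ) (hu : IsExhaustion u Ω)
    (hf : DifferentiableOn ℂ f Ω) (hH : DifferentiableOn ℂ H Ω) (hre : ∀ z ∈ Ω, 0 ≤ (H z).re)
    (hp : 0 ≤ p) (hr : r < 0) :
    Tendsto (fun s => ∫ z, ‖f z * dampingFactor s (H z)‖ ^ p ∂μ r) atTop
      (𝓝 (∫ z, ‖f z‖ ^ p ∂μ r)) := by
  have hΩ : ∀ᵐ z ∂μ r, z ∈ Ω := (hM.ae_mem r hr).mono fun z hz => hz.1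
  refine tendsto_integral_filter_of_dominated_convergence (fun z => ‖f z‖ ^ p) ?_ ?_
    (hM.integrable_norm_rpow hu hf.continuousOn hp hr) ?_
  · filter_upwards [eventually_gt_atTop 0] with s hs
    exact (hM.integrable_norm_rpow hu
      (differentiableOn_mul_dampingFactor hf hH hre hs).continuousOn hp hr).aestronglyMeasurable
  · filter_upwards [eventually_gt_atTop 0] with s hs
    filter_upwards [hΩ] with z hz
    rw [Real.norm_of_nonneg (by positivity), norm_mul]
    gcongr
    exact mul_le_of_le_one_right (norm_nonneg _) (norm_dampingFactor_le_one hs (hre z hz))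
  · refine .of_forall fun z => ?_
    have hlim := (tendsto_dampingFactor_atTop (H z)).const_mul (f z)
    rw [mul_one] at hlim
    exact hlim.norm.rpow_const (.inr hp)

lemma integral_norm_sub_mul_dampingFactor_le (hM : IsMongeAmpereFamily Ω u μ)
    (hu : IsExhaustion u Ω) (hf : DifferentiableOn ℂ f Ω) (hH : DifferentiableOn ℂ H Ω)
    (hre : ∀ z ∈ Ω, 0 ≤ (H z).re) (hp : 1 ≤ p) (hs : 0 < s) (hr : r < 0) {a K : ℝ} (hK0 : 0 ≤ K)
    (hK : ∀ y, 0 ≤ y → y ≤ 1 → y ^ p ≤ a + K * y ^ 2) :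
    ∫ z, ‖f z - f z * dampingFactor s (H z)‖ ^ p ∂μ r ≤ a * ∫ z, ‖f z‖ ^ p ∂μ r +
      2 * K * (∫ z, ‖f z‖ ^ p ∂μ r - ∫ z, ‖f z * dampingFactor s (H z)‖ ^ p ∂μ r) := by
  have hp0 : 0 ≤ p := zero_le_one.trans hp
  have hg := (differentiableOn_mul_dampingFactor hf hH hre hs).continuousOn
  have hfint := hM.integrable_norm_rpow hu hf.continuousOn hp0 hr
  have hgint := hM.integrable_norm_rpow hu hg hp0 hr
  have hdiff : Integrable
      (fun z => 2 * K * (‖f z‖ ^ p - ‖f z * dampingFactor s (H z)‖ ^ p)) (μ r) :=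
    (hfint.sub hgint).const_mul _
  rw [← integral_sub hfint hgint, ← integral_const_mul, ← integral_const_mul,
    ← integral_add (hfint.const_mul a) hdiff]
  refine integral_mono_ae (hM.integrable_norm_rpow hu (hf.continuousOn.sub hg) hp0 hr)
    ((hfint.const_mul a).add hdiff) ?_
  filter_upwards [hM.ae_mem r hr] with z hz
  exact norm_sub_mul_dampingFactor_rpow_le hp hs (hre z hz.1) hK0 hK

lemma exists_eventually_integral_le_integral_mul_dampingFactor_add
    (hM : IsMongeAmpereFamily Ω u μ) (hu : IsExhaustion u Ω) (hΩ : IsOpen Ω)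
    (hf : DifferentiableOn ℂ f Ω) (hH : DifferentiableOn ℂ H Ω) (hre : ∀ z ∈ Ω, 0 ≤ (H z).re)
    (hp : 0 < p) (hN : ∀ r < 0, ∫ z, ‖f z‖ ^ p ∂μ r ≤ N) {δ : ℝ} (hδ : 0 < δ) :
    ∃ s > 0, ∀ᶠ r in 𝓝[<] 0,
      ∫ z, ‖f z‖ ^ p ∂μ r ≤ ∫ z, ‖f z * dampingFactor s (H z)‖ ^ p ∂μ r + δ := by
  obtain ⟨⟨r₀, hr₀⟩, hmax⟩ := exists_forall_le_add_of_bddAbove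
    (I := fun r : Iio (0 : ℝ) => ∫ z, ‖f z‖ ^ p ∂μ r)
    ⟨N, forall_mem_range.2 fun r => hN r r.2⟩ (half_pos hδ)
  obtain ⟨s, hs, hfs⟩ := ((eventually_gt_atTop 0).and
    ((hM.tendsto_integral_mul_dampingFactor hu hf hH hre hp.le hr₀).eventually_const_lt
      (sub_lt_self _ (half_pos hδ)))).exists
  refine ⟨s, hs, ?_⟩
  filter_upwards [Ico_mem_nhdsLT hr₀] with r ⟨hr₀r, hr⟩
  linarith [hmax ⟨r, hr⟩, hM.integral_norm_rpow_mono hu hΩ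
    (differentiableOn_mul_dampingFactor hf hH hre hs) hp hr₀r hr]

lemma exists_bounded_eventually_integral_norm_sub_rpow_le (hM : IsMongeAmpereFamily Ω u μ)
    (hu : IsExhaustion u Ω) (hΩ : IsOpen Ω) (hf : DifferentiableOn ℂ f Ω)
    (hH : DifferentiableOn ℂ H Ω) (hfH : ∀ z ∈ Ω, ‖f z‖ ≤ (H z).re) (hp : 1 ≤ p)
    (hN : ∀ r < 0, ∫ z, ‖f z‖ ^ p ∂μ r ≤ N) {η : ℝ} (hη : 0 < η) :
    ∃ g : ℂ → ℂ, DifferentiableOn ℂ g Ω ∧ (∃ B, ∀ z ∈ Ω, ‖g z‖ ≤ B) ∧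
      ∀ᶠ r in 𝓝[<] 0, ∫ z, ‖f z - g z‖ ^ p ∂μ r ≤ η := by
  have hp0 : 0 < p := zero_lt_one.trans_le hp
  have hre (z) (hz : z ∈ Ω) : 0 ≤ (H z).re := (norm_nonneg _).trans (hfH z hz)
  obtain ⟨a, ha, haN⟩ : ∃ a > 0, a * N ≤ η / 2 := by
    have hlim : Tendsto (fun a => a * N) (𝓝[>] 0) (𝓝 0) :=
      ((continuous_id.mul continuous_const).tendsto' 0 0 (zero_mul N)).mono_left nhdsWithin_le_nhds
    exact (eventually_mem_nhdsWithin.and (hlim.eventually_le_const (half_pos hη))).exists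
  obtain ⟨K, hK0, hK⟩ := exists_forall_rpow_le_add_mul_sq (B := 1) hp0 ha
  obtain ⟨s, hs, hfs⟩ := hM.exists_eventually_integral_le_integral_mul_dampingFactor_add hu hΩ hf hH
    hre hp0 hN (δ := η / (4 * (K + 1))) (by positivity)
  refine ⟨_, differentiableOn_mul_dampingFactor hf hH hre hs,
    ⟨s, fun z hz => norm_mul_dampingFactor_le hs (hfH z hz)⟩, ?_⟩
  filter_upwards [hfs, self_mem_nhdsWithin] with r hfs hr
  calc ∫ z, ‖f z - f z * dampingFactor s (H z)‖ ^ p ∂μ r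
      ≤ a * ∫ z, ‖f z‖ ^ p ∂μ r +
          2 * K * (∫ z, ‖f z‖ ^ p ∂μ r - ∫ z, ‖f z * dampingFactor s (H z)‖ ^ p ∂μ r) :=
        hM.integral_norm_sub_mul_dampingFactor_le hu hf hH hre hp hs hr hK0 hK
    _ ≤ a * N + 2 * K * (η / (4 * (K + 1))) := by
        gcongr
        · exact hN r hr
        · exact sub_le_iff_le_add'.2 hfs
    _ ≤ η / 2 + η / 2 * (K / (K + 1)) := by
        refine add_le_add haN (le_of_eq ?_)
        field_simp
        ring
    _ ≤ η / 2 + η / 2 := by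
        gcongr
        exact mul_le_of_le_one_right (by positivity)
          (div_le_one_of_le₀ (by linarith) (by positivity))
    _ = η := add_halves η

end IsMongeAmpereFamily

end BoundedApproximation

/-! ### Approximation of bounded functions by `A(Ω)` -/

section Dilation

variable {Ω S : Set ℂ} {φ ψ g : ℂ → ℂ} {B ε : ℝ}

lemma IsRiemannMap.norm_le_one_of_mem_closure (h : IsRiemannMap Ω φ ψ)
    (hφ : ContinuousOn φ (closure Ω)) {z : ℂ} (hz : z ∈ closure Ω) : ‖φ z‖ ≤ 1 :=
  mem_closedBall_zero_iff.1 <|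
    closure_ball_subset_closedBall (h.mapsTo.closure_of_continuousOn hφ hz)

lemma norm_ofReal_mul_lt_one {t : ℝ} {w : ℂ} (ht0 : 0 ≤ t) (ht1 : t < 1) (hw : ‖w‖ ≤ 1) :
    ‖(t : ℂ) * w‖ < 1 := by
  rw [norm_mul, norm_real, Real.norm_of_nonneg ht0]
  exact (mul_le_of_le_one_right ht0 hw).trans_lt ht1

lemma IsRiemannMap.exists_continuousOn_closure_norm_sub_le (h : IsRiemannMap Ω φ ψ)
    (hφ : ContinuousOn φ (closure Ω)) (hg : DifferentiableOn ℂ g Ω) (hB : ∀ z ∈ Ω, ‖g z‖ ≤ B)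
    (hS : IsCompact S) (hSΩ : S ⊆ Ω) (hε : 0 < ε) :
    ∃ G : ℂ → ℂ, ContinuousOn G (closure Ω) ∧ DifferentiableOn ℂ G Ω ∧ (∀ z ∈ Ω, ‖G z‖ ≤ B) ∧
      ∀ z ∈ S, ‖G z - g z‖ ≤ ε := by
  have hgψ : DifferentiableOn ℂ (g ∘ ψ) (ball 0 1) := hg.comp h.differentiableOn_symm h.mapsTo_symm
  have hcont : ContinuousOn (fun q : ℝ × ℂ => (g ∘ ψ) (q.1 * φ q.2)) (Icc 0 1 ×ˢ S) := by
    refine hgψ.continuousOn.comp ?_ ?_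
    · exact (continuous_ofReal.comp continuous_fst).continuousOn.mul
        ((h.differentiableOn.continuousOn.mono hSΩ).comp continuousOn_snd fun q hq => hq.2)
    · rintro ⟨t, z⟩ ⟨⟨ht0, ht1⟩, hz⟩
      rw [mem_ball_zero_iff, norm_mul, norm_real, Real.norm_of_nonneg ht0]
      exact (mul_le_of_le_one_left (norm_nonneg _) ht1).trans_lt (h.norm_lt_one (hSΩ hz))
  obtain ⟨V, hV, hVε⟩ := hS.mem_uniformity_of_prod
    (f := fun t z => (g ∘ ψ) ((t : ℝ) * φ z)) hcont (right_mem_Icc.2 zero_le_one)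
    (Metric.dist_mem_uniformity hε)
  obtain ⟨t, htV, ht0, ht1⟩ : (V ∩ Ico 0 1).Nonempty := by
    have hIco : Ico 0 1 ∈ 𝓝[<] (1 : ℝ) := Ico_mem_nhdsLT zero_lt_one
    exact nonempty_of_mem
      (inter_mem (nhdsWithin_le_of_mem (mem_of_superset hIco Ico_subset_Icc_self) hV) hIco)
  have hmaps : MapsTo (fun w => (t : ℂ) * φ w) (closure Ω) (ball 0 1) := fun w hw =>
    mem_ball_zero_iff.2 (norm_ofReal_mul_lt_one ht0 ht1 (h.norm_le_one_of_mem_closure hφ hw))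
  refine ⟨fun w => (g ∘ ψ) (t * φ w), hgψ.continuousOn.comp (continuousOn_const.mul hφ) hmaps,
    hgψ.comp (h.differentiableOn.const_mul _) (hmaps.mono_left subset_closure),
    fun z hz => hB _ (h.mapsTo_symm (hmaps (subset_closure hz))), fun z hz => ?_⟩
  have hdist := hVε t htV z hz
  simp only [ofReal_one, one_mul, Function.comp_apply, h.invOn.1 (hSΩ hz)] at hdist
  rw [← dist_eq_norm]
  exact le_of_lt hdist

end Dilation

section SquareApproximation

lemma exists_forall_two_mul_add_sub_four_mul_midpoint_le {V : Type*} [AddCommGroup V] [Module ℝ V]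
    {Q : V → ℝ} {C : ℕ → Set V} {M ε : ℝ} (hC : Antitone C) (hne : ∀ n, (C n).Nonempty)
    (hmid : ∀ n, ∀ x ∈ C n, ∀ y ∈ C n, midpoint ℝ x y ∈ C n) (hQ : ∀ x ∈ C 0, Q x ∈ Icc 0 M)
    (hε : 0 < ε) :
    ∃ x : ℕ → V, (∀ k, x k ∈ C k) ∧
      ∃ n, ∀ k ≥ n, 2 * (Q (x n) + Q (x k)) - 4 * Q (midpoint ℝ (x n) (x k)) ≤ ε := by
  have hδ : 0 < ε / 6 := by positivity
  have hQn (n) : Q '' C n ⊆ Icc 0 M := image_subset_iff.2 fun x hx => hQ x (hC (zero_le) hx)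
  have hbdd (n) : BddBelow (Q '' C n) := bddBelow_Icc.mono (hQn n)
  choose x hxC hx using fun n => by
    simpa only [exists_mem_image] using
      exists_lt_of_csInf_lt ((hne n).image Q) (lt_add_of_pos_right (sInf (Q '' C n)) hδ)
  have hsInf_le (n) : sInf (Q '' C n) ≤ M :=
    (csInf_le (hbdd n) (mem_image_of_mem Q (hxC n))).trans (hQ _ (hC (zero_le) (hxC n))).2
  obtain ⟨n, hn⟩ := exists_forall_le_add_of_bddAbove (I := fun n => sInf (Q '' C n))
    ⟨M, forall_mem_range.2 hsInf_le⟩ hδ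
  refine ⟨x, hxC, n, fun k hk => ?_⟩
  have hle : sInf (Q '' C n) ≤ Q (midpoint ℝ (x n) (x k)) :=
    csInf_le (hbdd n) (mem_image_of_mem Q (hmid n _ (hxC n) _ (hC hk (hxC k))))
  linarith [hn k, hx n, hx k]

lemma norm_midpoint_sq_add {E : Type*} [NormedAddCommGroup E] [InnerProductSpace ℝ E] (x y : E) :
    4 * ‖midpoint ℝ x y‖ ^ 2 + ‖x - y‖ ^ 2 = 2 * (‖x‖ ^ 2 + ‖y‖ ^ 2) := by
  have hmid : 4 * ‖midpoint ℝ x y‖ ^ 2 = ‖x + y‖ ^ 2 := by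
    rw [midpoint_eq_smul_add, norm_smul, invOf_eq_inv, norm_inv, Real.norm_two]
    ring
  linarith [parallelogram_law_with_norm ℝ x y]

lemma integral_norm_midpoint_sq_add {X E : Type*} [MeasurableSpace X] {μ : Measure X}
    [NormedAddCommGroup E] [InnerProductSpace ℝ E] {F G : X → E}
    (hF : Integrable (fun x => ‖F x‖ ^ 2) μ) (hG : Integrable (fun x => ‖G x‖ ^ 2) μ)
    (hmid : Integrable (fun x => ‖midpoint ℝ F G x‖ ^ 2) μ)
    (hsub : Integrable (fun x => ‖(F - G) x‖ ^ 2) μ) :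
    4 * ∫ x, ‖midpoint ℝ F G x‖ ^ 2 ∂μ + ∫ x, ‖(F - G) x‖ ^ 2 ∂μ =
      2 * (∫ x, ‖F x‖ ^ 2 ∂μ + ∫ x, ‖G x‖ ^ 2 ∂μ) := by
  rw [← integral_add hF hG, ← integral_const_mul, ← integral_const_mul,
    ← integral_add (hmid.const_mul 4) hsub]
  congr with x
  rw [← norm_midpoint_sq_add, pi_midpoint_apply, Pi.sub_apply]

/-- The square `sup_{r < 0} ∫ ‖G‖² dμ_r` of the norm of `H²_u(Ω)`. -/
def hardyNormSq (μ : ℝ → Measure ℂ) (G : ℂ → ℂ) : ℝ := ⨆ r : Iio (0 : ℝ), ∫ z, ‖G z‖ ^ 2 ∂μ r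

variable {Ω : Set ℂ} {u : ℂ → ℝ} {μ : ℝ → Measure ℂ} {φ ψ g G G' : ℂ → ℂ} {p B r : ℝ}

namespace IsMongeAmpereFamily

lemma integrable_norm_sq (hM : IsMongeAmpereFamily Ω u μ) (hu : IsExhaustion u Ω)
    (hG : ContinuousOn G Ω) (hr : r < 0) : Integrable (fun z => ‖G z‖ ^ 2) (μ r) :=
  hM.integrable hu (hG.norm.pow 2) hr

lemma integral_norm_sq_mono (hM : IsMongeAmpereFamily Ω u μ) (hu : IsExhaustion u Ω)
    (hΩ : IsOpen Ω) (hG : DifferentiableOn ℂ G Ω) {r' : ℝ} (hrr' : r ≤ r') (hr' : r' < 0) :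
    ∫ z, ‖G z‖ ^ 2 ∂μ r ≤ ∫ z, ‖G z‖ ^ 2 ∂μ r' := by
  simpa only [Real.rpow_two] using hM.integral_norm_rpow_mono hu hΩ hG two_pos hrr' hr'

lemma exists_forall_integral_norm_sq_le (hM : IsMongeAmpereFamily Ω u μ) (B : ℝ) :
    ∃ M, ∀ G : ℂ → ℂ, (∀ z ∈ Ω, ‖G z‖ ≤ B) → ∀ r < 0, ∫ z, ‖G z‖ ^ 2 ∂μ r ≤ M := by
  obtain ⟨T, hT⟩ := hM.exists_measure_univ_le
  refine ⟨B ^ 2 * T, fun G hG r hr => ?_⟩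
  have hmass : (μ r).real univ ≤ T := ENNReal.toReal_mono ENNReal.coe_ne_top (hT r hr)
  have : IsFiniteMeasure (μ r) := ⟨(hT r hr).trans_lt ENNReal.coe_lt_top⟩
  have hbound : ∀ᵐ z ∂μ r, ‖‖G z‖ ^ 2‖ ≤ B ^ 2 := by
    filter_upwards [hM.ae_mem r hr] with z hz
    rw [norm_pow, norm_norm]
    gcongr
    exact hG z hz.1
  calc ∫ z, ‖G z‖ ^ 2 ∂μ r ≤ ‖∫ z, ‖G z‖ ^ 2 ∂μ r‖ := Real.le_norm_self _
    _ ≤ B ^ 2 * (μ r).real univ := norm_integral_le_of_norm_le_const hbound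
    _ ≤ B ^ 2 * T := by gcongr

lemma tendsto_integral_norm_sq (hM : IsMongeAmpereFamily Ω u μ) (hu : IsExhaustion u Ω)
    {F : ℕ → ℂ → ℂ} (hF : ∀ k, ContinuousOn (F k) Ω) (hB : ∀ k, ∀ z ∈ Ω, ‖F k z‖ ≤ B)
    (hFG : ∀ z ∈ Ω, Tendsto (fun k => F k z) atTop (𝓝 (G z))) (hr : r < 0) :
    Tendsto (fun k => ∫ z, ‖F k z‖ ^ 2 ∂μ r) atTop (𝓝 (∫ z, ‖G z‖ ^ 2 ∂μ r)) := by
  refine tendsto_integral_of_dominated_convergence (fun _ => B ^ 2)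
    (fun k => (hM.integrable_norm_sq hu (hF k) hr).aestronglyMeasurable)
    (hM.integrable hu continuousOn_const hr) (fun k => ?_) ?_
  · filter_upwards [hM.ae_mem r hr] with z hz
    rw [norm_pow, norm_norm]
    gcongr
    exact hB k z hz.1
  · filter_upwards [hM.ae_mem r hr] with z hz
    exact (hFG z hz.1).norm.pow 2

lemma integral_norm_sub_sq_le (hM : IsMongeAmpereFamily Ω u μ) (hu : IsExhaustion u Ω)
    (hΩ : IsOpen Ω) (hG : DifferentiableOn ℂ G Ω) (hG' : DifferentiableOn ℂ G' Ω)
    (hbdd : BddAbove (range fun r : Iio (0 : ℝ) => ∫ z, ‖G z‖ ^ 2 ∂μ r))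
    (hbdd' : BddAbove (range fun r : Iio (0 : ℝ) => ∫ z, ‖G' z‖ ^ 2 ∂μ r)) (hr : r < 0) :
    ∫ z, ‖(G - G') z‖ ^ 2 ∂μ r ≤
      2 * (hardyNormSq μ G + hardyNormSq μ G') - 4 * hardyNormSq μ (midpoint ℝ G G') := by
  have hmid : DifferentiableOn ℂ (midpoint ℝ G G') Ω := by
    rw [midpoint_eq_smul_add]
    exact (hG.add hG').const_smul _
  suffices hardyNormSq μ (midpoint ℝ G G') ≤ (2 * (hardyNormSq μ G + hardyNormSq μ G') -
      ∫ z, ‖(G - G') z‖ ^ 2 ∂μ r) / 4 by linarith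
  refine ciSup_le fun ⟨r', hr'⟩ => ?_
  have hR : max r r' < 0 := max_lt hr hr'
  have hint {F : ℂ → ℂ} (hF : DifferentiableOn ℂ F Ω) :=
    hM.integrable_norm_sq hu hF.continuousOn hR
  have hparallelogram := integral_norm_midpoint_sq_add (hint hG) (hint hG') (hint hmid)
    (hint (hG.sub hG'))
  have hle : ∫ z, ‖G z‖ ^ 2 ∂μ (max r r') ≤ hardyNormSq μ G := le_ciSup hbdd ⟨_, hR⟩
  have hle' : ∫ z, ‖G' z‖ ^ 2 ∂μ (max r r') ≤ hardyNormSq μ G' := le_ciSup hbdd' ⟨_, hR⟩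
  linarith [hM.integral_norm_sq_mono hu hΩ hmid (le_max_right r r') hR,
    hM.integral_norm_sq_mono hu hΩ (hG.sub hG') (le_max_left r r') hR]

end IsMongeAmpereFamily

end SquareApproximation

section ContinuousApproximation

variable {Ω : Set ℂ} {u : ℂ → ℝ} {μ : ℝ → Measure ℂ} {φ ψ g G G' : ℂ → ℂ} {p B δ : ℝ}

/-- The elements of `A(Ω)` which are bounded by `B` on `Ω` and within distance `δ` of `g` on the
sublevel set `{u ≤ -δ}`, among which approximations of `g` in `H^p_u(Ω)` are looked for. -/
structure IsApproximant (Ω : Set ℂ) (u : ℂ → ℝ) (g : ℂ → ℂ) (B δ : ℝ) (G : ℂ → ℂ) : Prop where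
  continuousOn : ContinuousOn G (closure Ω)
  differentiableOn : DifferentiableOn ℂ G Ω
  norm_le : ∀ z ∈ Ω, ‖G z‖ ≤ B
  norm_sub_le : ∀ z ∈ Ω, u z ≤ -δ → ‖G z - g z‖ ≤ δ

namespace IsApproximant

lemma mono (hG : IsApproximant Ω u g B δ G) {δ' : ℝ} (hδ : δ ≤ δ') :
    IsApproximant Ω u g B δ' G where
  continuousOn := hG.continuousOn
  differentiableOn := hG.differentiableOn
  norm_le := hG.norm_le
  norm_sub_le z hz hu := (hG.norm_sub_le z hz (hu.trans (neg_le_neg hδ))).trans hδ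

lemma midpoint (hG : IsApproximant Ω u g B δ G) (hG' : IsApproximant Ω u g B δ G') :
    IsApproximant Ω u g B δ (midpoint ℝ G G') where
  continuousOn := by
    rw [midpoint_eq_smul_add]
    exact (hG.continuousOn.add hG'.continuousOn).const_smul _
  differentiableOn := by
    rw [midpoint_eq_smul_add]
    exact (hG.differentiableOn.add hG'.differentiableOn).const_smul _
  norm_le z hz := by
    rw [pi_midpoint_apply]
    exact mem_closedBall_zero_iff.1 <| (convex_closedBall 0 B).midpoint_mem
      (mem_closedBall_zero_iff.2 (hG.norm_le z hz)) (mem_closedBall_zero_iff.2 (hG'.norm_le z hz))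
  norm_sub_le z hz hu := by
    rw [pi_midpoint_apply]
    exact mem_closedBall_iff_norm.1 <| (convex_closedBall (g z) δ).midpoint_mem
      (mem_closedBall_iff_norm.2 (hG.norm_sub_le z hz hu))
      (mem_closedBall_iff_norm.2 (hG'.norm_sub_le z hz hu))

lemma tendsto {δ : ℕ → ℝ} {G : ℕ → ℂ → ℂ} (hG : ∀ k, IsApproximant Ω u g B (δ k) (G k))
    (hδ : Tendsto δ atTop (𝓝 0)) {z : ℂ} (hz : z ∈ Ω) (huz : u z < 0) :
    Tendsto (fun k => G k z) atTop (𝓝 (g z)) := by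
  rw [tendsto_iff_norm_sub_tendsto_zero]
  refine squeeze_zero' (.of_forall fun k => norm_nonneg _) ?_ hδ
  filter_upwards [hδ.eventually_le_const (neg_pos.2 huz)] with k hk
  exact (hG k).norm_sub_le z hz (le_neg_of_le_neg hk)

end IsApproximant

lemma IsRiemannMap.exists_isApproximant (h : IsRiemannMap Ω φ ψ)
    (hφ : ContinuousOn φ (closure Ω)) (hu : IsExhaustion u Ω) (hg : DifferentiableOn ℂ g Ω)
    (hB : ∀ z ∈ Ω, ‖g z‖ ≤ B) (hδ : 0 < δ) : ∃ G, IsApproximant Ω u g B δ G := by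
  obtain ⟨G, hGc, hGd, hGB, hGg⟩ := h.exists_continuousOn_closure_norm_sub_le hφ hg hB
    (hu.isCompact_setOf_le (neg_neg_of_pos hδ)) (fun z hz => hz.1) hδ
  exact ⟨G, hGc, hGd, hGB, fun z hz huz => hGg z ⟨hz, huz⟩⟩

namespace IsMongeAmpereFamily

lemma exists_forall_integral_norm_sub_sq_le (hM : IsMongeAmpereFamily Ω u μ)
    (hu : IsExhaustion u Ω) (h : IsRiemannMap Ω φ ψ) (hφ : ContinuousOn φ (closure Ω))
    (hg : DifferentiableOn ℂ g Ω) (hB : ∀ z ∈ Ω, ‖g z‖ ≤ B) {η : ℝ} (hη : 0 < η) :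
    ∃ G, ContinuousOn G (closure Ω) ∧ DifferentiableOn ℂ G Ω ∧ (∀ z ∈ Ω, ‖G z‖ ≤ B) ∧
      ∀ r < 0, ∫ z, ‖G z - g z‖ ^ 2 ∂μ r ≤ η := by
  obtain ⟨M, hM_le⟩ := hM.exists_forall_integral_norm_sq_le B
  have hbdd {G : ℂ → ℂ} {δ : ℝ} (hG : IsApproximant Ω u g B δ G) :
      M ∈ upperBounds (range fun r : Iio (0 : ℝ) => ∫ z, ‖G z‖ ^ 2 ∂μ r) :=
    forall_mem_range.2 fun r => hM_le G hG.norm_le r r.2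
  obtain ⟨G, hG, n, hn⟩ := exists_forall_two_mul_add_sub_four_mul_midpoint_le
    (Q := hardyNormSq μ) (M := M)
    (C := fun n : ℕ => {G | IsApproximant Ω u g B (1 / ((n : ℝ) + 1)) G})
    (fun n k hnk G hG => IsApproximant.mono hG (by gcongr))
    (fun n => h.exists_isApproximant hφ hu hg hB (by positivity))
    (fun n G hG G' hG' => IsApproximant.midpoint hG hG')
    (fun G hG => ⟨Real.iSup_nonneg fun r => integral_nonneg fun z => by positivity,
      ciSup_le fun r => hbdd hG ⟨r, rfl⟩⟩) hη
  refine ⟨G n, (hG n).continuousOn, (hG n).differentiableOn, (hG n).norm_le, fun r hr => ?_⟩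
  have hlim : Tendsto (fun k => ∫ z, ‖(G n - G k) z‖ ^ 2 ∂μ r) atTop
      (𝓝 (∫ z, ‖G n z - g z‖ ^ 2 ∂μ r)) := by
    refine hM.tendsto_integral_norm_sq hu (B := B + B)
      (fun k => ((hG n).differentiableOn.sub (hG k).differentiableOn).continuousOn)
      (fun k z hz => norm_sub_le_of_le ((hG n).norm_le z hz) ((hG k).norm_le z hz))
      (fun z hz => ?_) hr
    exact (IsApproximant.tendsto hG tendsto_one_div_add_atTop_nhds_zero_nat hz
      (hu.neg z hz)).const_sub (G n z)
  refine le_of_tendsto hlim ?_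
  filter_upwards [eventually_ge_atTop n] with k hk
  exact (hM.integral_norm_sub_sq_le hu h.isOpen (hG n).differentiableOn (hG k).differentiableOn
    ⟨M, hbdd (hG n)⟩ ⟨M, hbdd (hG k)⟩ hr).trans (hn k hk)

lemma exists_forall_integral_norm_rpow_le (hM : IsMongeAmpereFamily Ω u μ)
    (hu : IsExhaustion u Ω) (hp : 0 < p) (B : ℝ) {η : ℝ} (hη : 0 < η) :
    ∃ δ > 0, ∀ F : ℂ → ℂ, ContinuousOn F Ω → (∀ z ∈ Ω, ‖F z‖ ≤ B) → ∀ r < 0,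
      ∫ z, ‖F z‖ ^ 2 ∂μ r ≤ δ → ∫ z, ‖F z‖ ^ p ∂μ r ≤ η := by
  obtain ⟨T, hT⟩ := hM.exists_measure_univ_le
  obtain ⟨K, hK0, hK⟩ := exists_forall_rpow_le_add_mul_sq (B := B) (a := η / (2 * (T + 1))) hp
    (by positivity)
  refine ⟨η / (2 * (K + 1)), by positivity, fun F hF hFB r hr hδ => ?_⟩
  have hmass : (μ r).real univ ≤ T := ENNReal.toReal_mono ENNReal.coe_ne_top (hT r hr)
  have : IsFiniteMeasure (μ r) := ⟨(hT r hr).trans_lt ENNReal.coe_lt_top⟩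
  have hint := (hM.integrable_norm_sq hu hF hr).const_mul K
  calc ∫ z, ‖F z‖ ^ p ∂μ r ≤ ∫ z, (η / (2 * (T + 1)) + K * ‖F z‖ ^ 2) ∂μ r := by
        refine integral_mono_ae (hM.integrable_norm_rpow hu hF hp.le hr)
          ((integrable_const _).add hint) ?_
        filter_upwards [hM.ae_mem r hr] with z hz
        exact hK _ (norm_nonneg _) (hFB z hz.1)
    _ = (μ r).real univ * (η / (2 * (T + 1))) + K * ∫ z, ‖F z‖ ^ 2 ∂μ r := by
        rw [integral_add (integrable_const _) hint, integral_const, integral_const_mul, smul_eq_mul]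
    _ ≤ (T + 1) * (η / (2 * (T + 1))) + (K + 1) * (η / (2 * (K + 1))) := by
        gcongr
        · linarith
        · linarith
    _ = η := by field_simp; norm_num

lemma exists_forall_integral_norm_sub_rpow_le (hM : IsMongeAmpereFamily Ω u μ)
    (hu : IsExhaustion u Ω) (h : IsRiemannMap Ω φ ψ) (hφ : ContinuousOn φ (closure Ω))
    (hg : DifferentiableOn ℂ g Ω) (hB : ∀ z ∈ Ω, ‖g z‖ ≤ B) (hp : 0 < p) {η : ℝ} (hη : 0 < η) :
    ∃ G, ContinuousOn G (closure Ω) ∧ DifferentiableOn ℂ G Ω ∧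
      ∀ r < 0, ∫ z, ‖G z - g z‖ ^ p ∂μ r ≤ η := by
  obtain ⟨δ, hδ, hδη⟩ := hM.exists_forall_integral_norm_rpow_le hu hp (B + B) hη
  obtain ⟨G, hGc, hGd, hGB, hG⟩ := hM.exists_forall_integral_norm_sub_sq_le hu h hφ hg hB hδ
  exact ⟨G, hGc, hGd, fun r hr => hδη (G - g) (hGd.sub hg).continuousOn
    (fun z hz => norm_sub_le_of_le (hGB z hz) (hB z hz)) r hr (hG r hr)⟩

end IsMongeAmpereFamily

end ContinuousApproximation

/-! ### Density -/

section Density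

lemma norm_add_rpow_le {E : Type*} [SeminormedAddCommGroup E] {p : ℝ} (hp : 1 ≤ p) (x y : E) :
    ‖x + y‖ ^ p ≤ 2 ^ (p - 1) * (‖x‖ ^ p + ‖y‖ ^ p) :=
  calc ‖x + y‖ ^ p ≤ (‖x‖ + ‖y‖) ^ p := by gcongr; exact norm_add_le x y
    _ ≤ 2 ^ (p - 1) * (‖x‖ ^ p + ‖y‖ ^ p) := mod_cast
      NNReal.rpow_add_le_mul_rpow_add_rpow ‖x‖₊ ‖y‖₊ hp

variable {Ω : Set ℂ} {u : ℂ → ℝ} {μ : ℝ → Measure ℂ} {f g G : ℂ → ℂ} {p c r : ℝ}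

namespace IsMongeAmpereFamily

lemma lintegral_ofReal_norm_rpow (hM : IsMongeAmpereFamily Ω u μ) (hu : IsExhaustion u Ω)
    (hf : ContinuousOn f Ω) (hp : 0 ≤ p) (hr : r < 0) :
    ∫⁻ z, ENNReal.ofReal (‖f z‖ ^ p) ∂μ r = ENNReal.ofReal (∫ z, ‖f z‖ ^ p ∂μ r) :=
  (ofReal_integral_eq_lintegral_ofReal (hM.integrable_norm_rpow hu hf hp hr)
    (.of_forall fun _ => by positivity)).symm

lemma exists_forall_integral_norm_rpow_le_of_memPS (hM : IsMongeAmpereFamily Ω u μ)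
    (hu : IsExhaustion u Ω) (hΩ : IsOpen Ω) (hp : 0 < p) (hf : MemPS p Ω μ f) :
    ∃ N, ∀ r < 0, ∫ z, ‖f z‖ ^ p ∂μ r ≤ N := by
  obtain ⟨c, hc, hc_top⟩ := exists_between hf.2
  refine ⟨c.toReal, fun r hr => ?_⟩
  obtain ⟨r', hr'c, hrr', hr'⟩ :=
    ((eventually_lt_of_limsup_lt hc).and (Ioo_mem_nhdsLT hr)).exists
  rw [hM.lintegral_ofReal_norm_rpow hu hf.1.continuousOn hp.le hr'] at hr'c
  exact (hM.integral_norm_rpow_mono hu hΩ hf.1 hp hrr'.le hr').trans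
    ((ENNReal.ofReal_le_iff_le_toReal hc_top.ne).1 hr'c.le)

lemma psNorm_le (hM : IsMongeAmpereFamily Ω u μ) (hu : IsExhaustion u Ω)
    (hf : ContinuousOn f Ω) (hp : 0 < p) (hc : 0 ≤ c)
    (hfc : ∀ᶠ r in 𝓝[<] 0, ∫ z, ‖f z‖ ^ p ∂μ r ≤ c ^ p) :
    psNorm p μ f ≤ ENNReal.ofReal c := by
  rw [psNorm, one_div, ENNReal.rpow_inv_le_iff hp, ENNReal.ofReal_rpow_of_nonneg hc hp.le]
  refine limsup_le_of_le (by isBoundedDefault) ?_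
  filter_upwards [hfc, self_mem_nhdsWithin] with r hfc hr
  rw [hM.lintegral_ofReal_norm_rpow hu hf hp.le hr]
  exact ENNReal.ofReal_le_ofReal hfc

lemma integral_norm_sub_rpow_le (hM : IsMongeAmpereFamily Ω u μ) (hu : IsExhaustion u Ω)
    (hf : ContinuousOn f Ω) (hg : ContinuousOn g Ω) (hG : ContinuousOn G Ω) (hp : 1 ≤ p)
    (hr : r < 0) :
    ∫ z, ‖f z - G z‖ ^ p ∂μ r ≤
      2 ^ (p - 1) * (∫ z, ‖f z - g z‖ ^ p ∂μ r + ∫ z, ‖g z - G z‖ ^ p ∂μ r) := by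
  have integrable_sub {F F' : ℂ → ℂ} (hF : ContinuousOn F Ω) (hF' : ContinuousOn F' Ω) :
      Integrable (fun z => ‖F z - F' z‖ ^ p) (μ r) :=
    hM.integrable_norm_rpow hu (hF.sub hF') (zero_le_one.trans hp) hr
  rw [← integral_add (integrable_sub hf hg) (integrable_sub hg hG), ← integral_const_mul]
  refine MeasureTheory.integral_mono (integrable_sub hf hG)
    (((integrable_sub hf hg).add (integrable_sub hg hG)).const_mul _) fun z => ?_
  simpa only [sub_add_sub_cancel] using norm_add_rpow_le hp (f z - g z) (g z - G z)

end IsMongeAmpereFamily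

end Density

theorem stmt14_general {Ω : Set ℂ} {φ ψ : ℂ → ℂ} (h : IsRiemannMap Ω φ ψ)
    (hφ : ContinuousOn φ (closure Ω)) {u : ℂ → ℝ} (hu : IsExhaustion u Ω) {ν : Measure ℂ}
    (hν : IsRieszMeasure u Ω ν) (hfin : ν univ < ⊤) {μfam : ℝ → Measure ℂ}
    (hμ : ∀ r : ℝ, r < 0 → IsMAMeasure u Ω ν r (μfam r)) {p : ℝ} (hp : 1 ≤ p)
    (f : ℂ → ℂ) (hf : MemPS p Ω μfam f) (ε : ℝ) (hε : 0 < ε) :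
    ∃ g : ℂ → ℂ, ContinuousOn g (closure Ω) ∧ DifferentiableOn ℂ g Ω ∧
      psNorm p μfam (fun z => f z - g z) < ENNReal.ofReal ε := by
  have hp0 : 0 < p := zero_lt_one.trans_le hp
  have : IsFiniteMeasure ν := ⟨hfin⟩
  have hM : IsMongeAmpereFamily Ω u μfam := isMongeAmpereFamily hu h hν hμ
  have hη : 0 < (ε / 4) ^ p := by positivity
  obtain ⟨N, hN⟩ := hM.exists_forall_integral_norm_rpow_le_of_memPS hu h.isOpen hp0 hf
  obtain ⟨H, hH, hfH⟩ := hM.exists_norm_le_re hu h hf.1 hp hN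
  obtain ⟨g, hg, ⟨B, hB⟩, hfg⟩ :=
    hM.exists_bounded_eventually_integral_norm_sub_rpow_le hu h.isOpen hf.1 hH hfH hp hN hη
  obtain ⟨G, hGc, hG, hgG⟩ := hM.exists_forall_integral_norm_sub_rpow_le hu h hφ hg hB hp0 hη
  refine ⟨G, hGc, hG, (hM.psNorm_le hu (hf.1.sub hG).continuousOn hp0 (half_pos hε).le ?_).trans_lt
    ((ENNReal.ofReal_lt_ofReal_iff hε).2 (half_lt_self hε))⟩
  filter_upwards [hfg, self_mem_nhdsWithin] with r hfg hr
  calc ∫ z, ‖f z - G z‖ ^ p ∂μfam r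
      ≤ 2 ^ (p - 1) * (∫ z, ‖f z - g z‖ ^ p ∂μfam r + ∫ z, ‖g z - G z‖ ^ p ∂μfam r) :=
        hM.integral_norm_sub_rpow_le hu hf.1.continuousOn hg.continuousOn hG.continuousOn hp hr
    _ ≤ 2 ^ (p - 1) * ((ε / 4) ^ p + (ε / 4) ^ p) := by
        gcongr
        simpa only [norm_sub_rev] using hgG r hr
    _ = (ε / 2) ^ p := by
        rw [← two_mul, ← mul_assoc, Real.rpow_sub_one two_ne_zero, div_mul_cancel₀ _ two_ne_zero,
          ← Real.mul_rpow two_pos.le (by positivity)]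
        ring_nf

/-- The algebra `A(Ω)` of functions holomorphic on `Ω` and continuous
on the closure of `Ω` is dense in `H^p_u(Ω)` for `1 ≤ p < ∞`. -/
theorem stmt14 (Ω : Set ℂ) (hΩ : AnalyticJordanDomain Ω)
    (u : ℂ → ℝ) (hu : IsExhaustion u Ω)
    (ν : Measure ℂ) (hν : IsRieszMeasure u Ω ν) (hfin : ν Set.univ < ⊤)
    (μfam : ℝ → Measure ℂ) (hμ : ∀ r : ℝ, r < 0 → IsMAMeasure u Ω ν r (μfam r))
    (p : ℝ) (hp : 1 ≤ p) :
    ∀ f : ℂ → ℂ, MemPS p Ω μfam f → ∀ ε : ℝ, 0 < ε →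
      ∃ g : ℂ → ℂ, ContinuousOn g (closure Ω) ∧ DifferentiableOn ℂ g Ω ∧
        psNorm p μfam (fun z => f z - g z) < ENNReal.ofReal ε := by
  obtain ⟨φ, ψ, h, hφ⟩ := hΩ.exists_isRiemannMap
  exact stmt14_general h hφ hu hν hfin hμ hp

end
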